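/- Let H be a complex Hilbert space, J a signature operator on H, and L a densely defined self-adjoint operator in H which is uniformly positive: there is λ₀ > 0 with ⟨Lh, h⟩ ≥ λ₀‖h‖² for all h ∈ dom L. Let B := JL and assume B is similar to a self-adjoint operator in H. Let f : [0, ∞) → H satisfy: (a) for each x₁ > 0 there exist K > 0 and k ∈ (0, 1] with ‖f(x) − f(y)‖ ≤ K |x − y|^k for all 0 ≤ x, y ≤ x₁, and (b) sup_{x ≥ 0} ‖f(x)‖ < ∞. Then for every φ₊ ∈ H₊ there exists a unique function ψ : [0, ∞) → H which is continuous on [0, ∞), continuously differentiable on (0, ∞), satisfies ψ(x) ∈ dom B and ψ′(x) = −Bψ(x) + f(x) for all x > 0, satisfies P₊ψ(0) = φ₊, and is bounded: sup_{x ≥ 0} ‖ψ(x)‖ < ∞. -/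

import Mathlib

open scoped ComplexOrder InnerProductSpace

noncomputable section

variable {H : Type*} [NormedAddCommGroup H] [InnerProductSpace ℂ H] [CompleteSpace H]

/-- `J` is a signature operator: `J = J* = J⁻¹`. -/
def IsSignatureOperator (J : H →L[ℂ] H) : Prop :=
  IsSelfAdjoint J ∧ J.comp J = ContinuousLinearMap.id ℂ H

/-- The orthogonal projection onto `H₊ = ker (J - I)`, which equals `(I + J)/2`
for a signature operator `J`. -/
def Pplus (J : H →L[ℂ] H) : H →L[ℂ] H := (2⁻¹ : ℂ) • (ContinuousLinearMap.id ℂ H + J)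

/-- The orthogonal projection onto `H₋ = ker (J + I)`, which equals `(I - J)/2`
for a signature operator `J`. -/
def Pminus (J : H →L[ℂ] H) : H →L[ℂ] H := (2⁻¹ : ℂ) • (ContinuousLinearMap.id ℂ H - J)

/-- The composition `J ∘ L` of a bounded operator `J` with an unbounded operator `L`,
as an unbounded operator with the same domain as `L`. -/
def pmapComp (J : H →L[ℂ] H) (L : H →ₗ.[ℂ] H) : H →ₗ.[ℂ] H :=
  { domain := L.domain
    toFun := (J : H →ₗ[ℂ] H).comp L.toFun }

/-- `L` is a positive operator: `⟨L h, h⟩ > 0` for every nonzero `h ∈ dom L`. -/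
def IsPositivePMap (L : H →ₗ.[ℂ] H) : Prop :=
  ∀ h : L.domain, (h : H) ≠ 0 → 0 < ⟪L h, (h : H)⟫_ℂ

/-- `B` is similar to a self-adjoint operator: there is a bounded operator `S` with bounded
inverse mapping `dom B` onto the domain of a self-adjoint operator `A` such that
`A (S h) = S (B h)` for all `h ∈ dom B`. -/
def SimilarToSelfAdjoint (B : H →ₗ.[ℂ] H) : Prop :=
  ∃ (S : H ≃L[ℂ] H) (A : H →ₗ.[ℂ] H), IsSelfAdjoint A ∧
    (A.domain : Set H) = (fun h => S h) '' (B.domain : Set H) ∧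
    ∀ (h : B.domain) (hSh : S (h : H) ∈ A.domain), A ⟨S (h : H), hSh⟩ = S (B h)

/-- `ψ` solves `ψ' = -B ψ + f` on the set `s` with a continuous derivative:
on `s`, `ψ` takes values in `dom B`, is differentiable with derivative `ψ'`,
`ψ'` is continuous on `s`, and `ψ' x = -B (ψ x) + f x`. -/
def IsStrongSolutionOn (B : H →ₗ.[ℂ] H) (f : ℝ → H) (ψ : ℝ → H) (s : Set ℝ) : Prop :=
  ∃ ψ' : ℝ → H, ContinuousOn ψ' s ∧
    ∀ x ∈ s, HasDerivAt ψ (ψ' x) x ∧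
      ∃ hx : ψ x ∈ B.domain, ψ' x = -(B ⟨ψ x, hx⟩) + f x

/-!
Uniform positivity makes `B` boundedly invertible, `B⁻¹ = L⁻¹ J`, so `ψ' = -B ψ + f` can be written
with bounded operators only, as `ψ = B⁻¹ (f - ψ')`. Let `S` conjugate `B` to a self-adjoint
operator and put `T = S B⁻¹ S⁻¹`. The Gram operator `W` of `⟪J ·, ·⟫` in the coordinates `S` is
self-adjoint and invertible, and `W T ≥ 0`, so `W` and `T` commute and the spectral projection `P`
of `W` onto `(0, ∞)` splits the equation in two. With `R = T (2 P - 1) ≥ 0`, one part is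
parabolic forwards and the other backwards, and both are solved by integrating the semigroup
`exp (-x R⁻¹)` against `f`. It decays exponentially because `R` is bounded, hence bounded data
give bounded solutions.

The value of the solution at `0` is free in the range of `P`. The boundary condition
`P₊ ψ(0) = φ₊` can be met because `⟪J ·, ·⟫` is the form of `W`, which only increases when cut down
to the range of `P`: the compression of `S⁻¹ P S` to `H₊` is coercive, and Lax–Milgram applies.

Uniqueness is an energy estimate: for a solution of the homogeneous problem `⟪J ψ, ψ⟫` decreases
at rate `2 ⟪L ψ, ψ⟫ ≥ 2 λ₀ ‖ψ‖²`, starts at `-‖ψ(0)‖²` and is bounded below.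
-/

open Set Filter Topology MeasureTheory
open scoped NNReal

section LocallyHolder

variable {X Y Z : Type*} [PseudoEMetricSpace X] [PseudoEMetricSpace Y] [PseudoEMetricSpace Z]

/-- Local Hölder continuity: every point has a neighbourhood on which `f` is Hölder continuous
with some positive exponent. Constant and exponent may depend on the point. -/
def LocallyHolder (f : X → Y) : Prop :=
  ∀ x, ∃ C r : ℝ≥0, 0 < r ∧ ∃ s ∈ 𝓝 x, HolderOnWith C r f s

namespace LocallyHolder

variable {f : X → Y}

protected theorem continuous (hf : LocallyHolder f) : Continuous f := by
  refine continuous_iff_continuousAt.2 fun x => ?_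
  obtain ⟨C, r, hr, s, hs, hfs⟩ := hf x
  exact (hfs.continuousOn hr).continuousAt hs

theorem comp_lipschitzWith {g : Z → X} {K : ℝ≥0} (hf : LocallyHolder f) (hg : LipschitzWith K g) :
    LocallyHolder (f ∘ g) := by
  intro z
  obtain ⟨C, r, hr, s, hs, hfs⟩ := hf (g z)
  exact ⟨_, _, by simpa using hr, g ⁻¹' s, hg.continuous.continuousAt hs,
    hfs.comp (hg.holderWith.holderOnWith _) (mapsTo_preimage g s)⟩

theorem lipschitzWith_comp {g : Y → Z} {K : ℝ≥0} (hf : LocallyHolder f) (hg : LipschitzWith K g) :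
    LocallyHolder (g ∘ f) := by
  intro x
  obtain ⟨C, r, hr, s, hs, hfs⟩ := hf x
  exact ⟨_, _, by simpa using hr, s, hs, hg.holderWith.comp_holderOnWith hfs⟩

end LocallyHolder

end LocallyHolder

section ExpNegInvGlue

theorem expNegInvGlue_div_of_pos {t τ : ℝ} (ht : 0 < t) (hτ : 0 < τ) :
    expNegInvGlue (t / τ) = Real.exp (-(τ / t)) := by
  rw [expNegInvGlue, if_neg (not_le.2 (div_pos ht hτ)), inv_div]

theorem expNegInvGlue_div_mul {t σ τ : ℝ} (ht : 0 ≤ t) (hσ : 0 < σ) (hτ : 0 < τ) :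
    expNegInvGlue (t / σ) * expNegInvGlue (t / τ) = expNegInvGlue (t / (σ + τ)) := by
  rcases ht.eq_or_lt with rfl | ht
  · simp
  · rw [expNegInvGlue_div_of_pos ht hσ, expNegInvGlue_div_of_pos ht hτ,
      expNegInvGlue_div_of_pos ht (by positivity), ← Real.exp_add]
    congr 1
    ring

theorem continuous_expNegInvGlue_div (τ : ℝ) : Continuous fun t : ℝ => expNegInvGlue (t / τ) :=
  (expNegInvGlue.contDiff (n := 0)).continuous.comp (continuous_id.div_const τ)

theorem continuous_inv_mul_expNegInvGlue_div {τ : ℝ} (hτ : τ ≠ 0) :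
    Continuous fun t : ℝ => t⁻¹ * expNegInvGlue (t / τ) := by
  refine (((expNegInvGlue.continuous_polynomial_eval_inv_mul Polynomial.X).comp
    (continuous_id.div_const τ)).const_mul τ⁻¹).congr fun t => ?_
  simp only [Function.comp, Polynomial.eval_X, id, inv_div]
  field_simp

theorem expNegInvGlue_div_le_exp {t τ M : ℝ} (ht : 0 ≤ t) (htM : t ≤ M) (hτ : 0 < τ) :
    expNegInvGlue (t / τ) ≤ Real.exp (-(τ / M)) := by
  rcases ht.eq_or_lt with rfl | ht
  · simpa using (Real.exp_pos _).le
  · rw [expNegInvGlue_div_of_pos ht hτ]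
    gcongr

theorem inv_mul_expNegInvGlue_div_le {t τ M : ℝ} (ht : 0 ≤ t) (htM : t ≤ M) (hτ : 0 < τ) :
    t⁻¹ * expNegInvGlue (t / τ) ≤ 2 * τ⁻¹ * Real.exp (-(τ / (2 * M))) := by
  rcases ht.eq_or_lt with rfl | ht
  · simp only [inv_zero, zero_mul]
    positivity
  have hle : t⁻¹ ≤ 2 * τ⁻¹ * Real.exp (τ / (2 * t)) := by
    have := Real.add_one_le_exp (τ / (2 * t))
    calc t⁻¹ = 2 * τ⁻¹ * (τ / (2 * t)) := by field_simp
      _ ≤ 2 * τ⁻¹ * Real.exp (τ / (2 * t)) := by gcongr; linarith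
  calc t⁻¹ * expNegInvGlue (t / τ)
      ≤ 2 * τ⁻¹ * Real.exp (τ / (2 * t)) * Real.exp (-(τ / t)) := by
        rw [expNegInvGlue_div_of_pos ht hτ]
        gcongr
    _ = 2 * τ⁻¹ * Real.exp (-(τ / (2 * t))) := by
        rw [mul_assoc, ← Real.exp_add]
        congr 2
        field_simp
        ring
    _ ≤ 2 * τ⁻¹ * Real.exp (-(τ / (2 * M))) := by gcongr

theorem abs_exp_sub_one_sub_id_le_mul_exp (x : ℝ) :
    |Real.exp x - 1 - x| ≤ x ^ 2 * Real.exp |x| := by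
  have h := Complex.norm_exp_sub_sum_le_norm_mul_exp x 2
  simp only [Finset.sum_range_succ, Finset.sum_range_zero, pow_zero, pow_one, Nat.factorial,
    Nat.cast_one, div_one, zero_add, Nat.succ_eq_add_one, mul_one, Complex.norm_real,
    Real.norm_eq_abs, sq_abs] at h
  rw [sub_sub]
  exact_mod_cast h

theorem abs_expNegInvGlue_div_add_sub_le {t τ h : ℝ} (ht : 0 ≤ t) (hτ : 0 < τ)
    (hh : |h| ≤ τ / 2) :
    |expNegInvGlue (t / (τ + h)) - expNegInvGlue (t / τ)
      + h * (t⁻¹ * expNegInvGlue (t / τ))| ≤ 8 * (τ ^ 2)⁻¹ * h ^ 2 := by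
  rcases ht.eq_or_lt with rfl | ht
  · simp only [zero_div, expNegInvGlue.zero, sub_self, mul_zero, add_zero, abs_zero]
    positivity
  have hτh : 0 < τ + h := by linarith [neg_abs_le h]
  have hfactor : Real.exp (-((τ + h) / t)) - Real.exp (-(τ / t))
      + h * (t⁻¹ * Real.exp (-(τ / t)))
        = Real.exp (-(τ / t)) * (Real.exp (-(h / t)) - 1 - -(h / t)) := by
    rw [add_div, neg_add, Real.exp_add]
    ring
  have hexp : Real.exp |-(h / t)| ≤ Real.exp (τ / t / 2) := by
    rw [Real.exp_le_exp, abs_neg, abs_div, abs_of_pos ht, div_right_comm]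
    gcongr
  have hsq : (τ / t) ^ 2 ≤ 8 * Real.exp (τ / t / 2) := by
    have := Real.quadratic_le_exp_of_nonneg (x := τ / t / 2) (by positivity)
    have : 0 ≤ τ / t := by positivity
    nlinarith
  rw [expNegInvGlue_div_of_pos ht hτ, expNegInvGlue_div_of_pos ht hτh, hfactor, abs_mul,
    Real.abs_exp]
  calc Real.exp (-(τ / t)) * |Real.exp (-(h / t)) - 1 - -(h / t)|
      ≤ Real.exp (-(τ / t)) * ((-(h / t)) ^ 2 * Real.exp (τ / t / 2)) := by
        gcongr
        exact (abs_exp_sub_one_sub_id_le_mul_exp _).trans (by gcongr)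
    _ = (τ ^ 2)⁻¹ * h ^ 2 * (τ / t) ^ 2 * Real.exp (-(τ / t / 2)) := by
        rw [show -(τ / t) = -(τ / t / 2) + -(τ / t / 2) by ring, Real.exp_add,
          Real.exp_neg (τ / t / 2)]
        field_simp
    _ ≤ (τ ^ 2)⁻¹ * h ^ 2 * (8 * Real.exp (τ / t / 2)) * Real.exp (-(τ / t / 2)) := by gcongr
    _ = 8 * (τ ^ 2)⁻¹ * h ^ 2 := by
        rw [Real.exp_neg]
        field_simp

theorem abs_mul_expNegInvGlue_div_sub_le {t τ : ℝ} (ht : 0 ≤ t) (hτ : 0 < τ) :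
    |t * expNegInvGlue (t / τ) - t| ≤ τ := by
  rcases ht.eq_or_lt with rfl | ht
  · simpa using hτ.le
  have hle : expNegInvGlue (t / τ) ≤ 1 :=
    (expNegInvGlue_div_le_exp ht.le le_rfl hτ).trans
      (Real.exp_le_one_iff.2 (neg_nonpos.2 (by positivity)))
  have hge : t * (1 - τ / t) ≤ t * expNegInvGlue (t / τ) := by
    rw [expNegInvGlue_div_of_pos ht hτ]
    gcongr
    exact Real.one_sub_le_exp_neg _
  rw [mul_sub, mul_one, mul_div_cancel₀ _ ht.ne'] at hge
  rw [abs_le]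
  constructor <;> nlinarith

end ExpNegInvGlue

section InvSemigroup

variable {A : Type*} [CStarAlgebra A]

/-- The semigroup `τ ↦ exp (-τ R⁻¹)` generated by the inverse of a nonnegative element `R` of a
C⋆-algebra, for which `R` need not be invertible; it is extended by `1` to `τ ≤ 0`. -/
def invSemigroup (R : A) (τ : ℝ) : A :=
  if τ ≤ 0 then 1 else cfc (fun t : ℝ => expNegInvGlue (t / τ)) R

/-- The derivative `-R⁻¹ exp (-τ R⁻¹)` of `invSemigroup R` at `τ > 0`. -/
def invSemigroupDeriv (R : A) (τ : ℝ) : A :=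
  -cfc (fun t : ℝ => t⁻¹ * expNegInvGlue (t / τ)) R

/-- An exponential decay rate of `invSemigroup R`. The summand `1` covers `R = 0`. -/
def decayRate (R : A) : ℝ := (‖R‖ + 1)⁻¹

theorem decayRate_pos (R : A) : 0 < decayRate R := by
  unfold decayRate
  positivity

theorem invSemigroup_of_nonpos (R : A) {τ : ℝ} (hτ : τ ≤ 0) : invSemigroup R τ = 1 :=
  if_pos hτ

theorem invSemigroup_of_pos (R : A) {τ : ℝ} (hτ : 0 < τ) :
    invSemigroup R τ = cfc (fun t : ℝ => expNegInvGlue (t / τ)) R :=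
  if_neg (not_le.2 hτ)

theorem commute_invSemigroup (R : A) (τ : ℝ) : Commute R (invSemigroup R τ) := by
  unfold invSemigroup
  split_ifs
  · exact Commute.one_right R
  · exact ((Commute.refl R).cfc_real _).symm

variable [PartialOrder A] [StarOrderedRing A] {R : A}

theorem mem_Icc_of_mem_spectrum (hR : 0 ≤ R) {t : ℝ} (ht : t ∈ spectrum ℝ R) :
    t ∈ Icc 0 ‖R‖ :=
  ⟨spectrum_nonneg_of_nonneg hR ht, (le_abs_self t).trans
    (IsometricContinuousFunctionalCalculus.norm_spectrum_le R ht (.of_nonneg hR))⟩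

theorem mul_invSemigroupDeriv (hR : 0 ≤ R) {τ : ℝ} (hτ : 0 < τ) :
    R * invSemigroupDeriv R τ = -invSemigroup R τ := by
  have hsa : IsSelfAdjoint R := .of_nonneg hR
  rw [invSemigroupDeriv, invSemigroup_of_pos R hτ, mul_neg]
  congr 1
  nth_rewrite 1 [← cfc_id' ℝ R]
  rw [← cfc_mul _ _ R (by fun_prop) (continuous_inv_mul_expNegInvGlue_div hτ.ne').continuousOn]
  refine cfc_congr fun t ht => ?_
  rcases (mem_Icc_of_mem_spectrum hR ht).1.eq_or_lt with rfl | ht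
  · simp
  · field_simp

theorem invSemigroupDeriv_mul (hR : 0 ≤ R) {σ τ : ℝ} (hσ : 0 < σ) (hτ : 0 < τ) :
    invSemigroupDeriv R σ * invSemigroup R τ = invSemigroupDeriv R (σ + τ) := by
  rw [invSemigroup_of_pos R hτ, invSemigroupDeriv, invSemigroupDeriv, neg_mul,
    ← cfc_mul _ _ R (continuous_inv_mul_expNegInvGlue_div hσ.ne').continuousOn
      (continuous_expNegInvGlue_div τ).continuousOn]
  congr 1
  refine cfc_congr fun t ht => ?_
  rw [mul_assoc, expNegInvGlue_div_mul (mem_Icc_of_mem_spectrum hR ht).1 hσ hτ]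

theorem norm_invSemigroup_le_exp (hR : 0 ≤ R) {τ : ℝ} (hτ : 0 < τ) :
    ‖invSemigroup R τ‖ ≤ Real.exp (-(decayRate R * τ)) := by
  rw [invSemigroup_of_pos R hτ, decayRate, ← div_eq_inv_mul]
  refine norm_cfc_le (Real.exp_pos _).le fun t ht => ?_
  obtain ⟨ht, htR⟩ := mem_Icc_of_mem_spectrum hR ht
  rw [Real.norm_of_nonneg (expNegInvGlue.nonneg _)]
  exact expNegInvGlue_div_le_exp ht (by linarith) hτ

theorem norm_invSemigroup_le_one (hR : 0 ≤ R) (τ : ℝ) : ‖invSemigroup R τ‖ ≤ 1 := by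
  rcases le_or_gt τ 0 with hτ | hτ
  · rw [invSemigroup_of_nonpos R hτ, ← cfc_const_one ℝ R (.of_nonneg hR)]
    exact norm_cfc_le zero_le_one fun t _ => by simp
  · refine (norm_invSemigroup_le_exp hR hτ).trans (Real.exp_le_one_iff.2 ?_)
    exact neg_nonpos.2 (mul_pos (decayRate_pos R) hτ).le

theorem norm_invSemigroupDeriv_le (hR : 0 ≤ R) {τ : ℝ} (hτ : 0 < τ) :
    ‖invSemigroupDeriv R τ‖ ≤ 2 * τ⁻¹ * Real.exp (-(decayRate R / 2 * τ)) := by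
  rw [invSemigroupDeriv, norm_neg, show decayRate R / 2 * τ = τ / (2 * (‖R‖ + 1)) by
    rw [decayRate]; field_simp]
  refine norm_cfc_le (by positivity) fun t ht => ?_
  obtain ⟨ht, htR⟩ := mem_Icc_of_mem_spectrum hR ht
  rw [Real.norm_of_nonneg (mul_nonneg (inv_nonneg.2 ht) (expNegInvGlue.nonneg _))]
  exact inv_mul_expNegInvGlue_div_le ht (by linarith) hτ

theorem norm_invSemigroup_add_sub_sub_le (hR : 0 ≤ R) {τ h : ℝ} (hτ : 0 < τ)
    (hh : |h| ≤ τ / 2) :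
    ‖invSemigroup R (τ + h) - invSemigroup R τ - h • invSemigroupDeriv R τ‖
      ≤ 8 * (τ ^ 2)⁻¹ * h ^ 2 := by
  have hτh : 0 < τ + h := by linarith [neg_abs_le h]
  have hc₁ := (continuous_expNegInvGlue_div (τ + h)).continuousOn (s := spectrum ℝ R)
  have hc₂ := (continuous_expNegInvGlue_div τ).continuousOn (s := spectrum ℝ R)
  have hc₃ := (continuous_inv_mul_expNegInvGlue_div hτ.ne').continuousOn (s := spectrum ℝ R)
  rw [invSemigroup_of_pos R hτ, invSemigroup_of_pos R hτh, invSemigroupDeriv, smul_neg,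
    sub_neg_eq_add, ← cfc_sub _ _ R hc₁ hc₂, ← cfc_smul h _ R hc₃,
    ← cfc_add R (fun t => expNegInvGlue (t / (τ + h)) - expNegInvGlue (t / τ))
      (fun t => h • (t⁻¹ * expNegInvGlue (t / τ))) (hc₁.sub hc₂) (hc₃.const_smul h)]
  exact norm_cfc_le (by positivity) fun t ht =>
    abs_expNegInvGlue_div_add_sub_le (mem_Icc_of_mem_spectrum hR ht).1 hτ hh

theorem hasDerivAt_invSemigroup (hR : 0 ≤ R) {τ : ℝ} (hτ : 0 < τ) :
    HasDerivAt (invSemigroup R) (invSemigroupDeriv R τ) τ := by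
  rw [hasDerivAt_iff_isLittleO_nhds_zero]
  refine Asymptotics.IsBigO.trans_isLittleO (g := fun h : ℝ => h ^ 2)
    (Asymptotics.IsBigO.of_bound (8 * (τ ^ 2)⁻¹) ?_)
    (by simpa using Asymptotics.isLittleO_pow_pow (𝕜 := ℝ) one_lt_two)
  filter_upwards [Metric.closedBall_mem_nhds (0 : ℝ) (half_pos hτ)] with h hh
  rw [Real.norm_of_nonneg (sq_nonneg h)]
  exact norm_invSemigroup_add_sub_sub_le hR hτ (mem_closedBall_zero_iff.1 hh)

theorem hasDerivAt_mul_invSemigroup (hR : 0 ≤ R) {τ : ℝ} (hτ : 0 < τ) :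
    HasDerivAt (fun τ => R * invSemigroup R τ) (-invSemigroup R τ) τ := by
  rw [← mul_invSemigroupDeriv hR hτ]
  exact (hasDerivAt_invSemigroup hR hτ).const_mul R

theorem continuousOn_invSemigroup (hR : 0 ≤ R) : ContinuousOn (invSemigroup R) (Ioi 0) :=
  fun _ hτ => (hasDerivAt_invSemigroup hR hτ).continuousAt.continuousWithinAt

theorem continuousOn_invSemigroupDeriv (hR : 0 ≤ R) :
    ContinuousOn (invSemigroupDeriv R) (Ioi 0) := by
  refine fun τ hτ => ContinuousAt.continuousWithinAt ?_
  rw [mem_Ioi] at hτ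
  have hfactor : ContinuousAt
      (fun σ => invSemigroupDeriv R (τ / 2) * invSemigroup R (σ - τ / 2)) τ := by
    refine continuousAt_const.mul (ContinuousAt.comp (g := invSemigroup R) ?_ (by fun_prop))
    exact (hasDerivAt_invSemigroup hR (by linarith)).continuousAt
  refine hfactor.congr ?_
  filter_upwards [Ioi_mem_nhds (half_lt_self hτ)] with σ hσ
  rw [invSemigroupDeriv_mul hR (half_pos hτ) (sub_pos.2 hσ), add_sub_cancel]

theorem norm_mul_invSemigroup_sub_le (hR : 0 ≤ R) {τ : ℝ} (hτ : 0 ≤ τ) :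
    ‖R * invSemigroup R τ - R‖ ≤ τ := by
  rcases hτ.eq_or_lt with rfl | hτ
  · simp [invSemigroup_of_nonpos]
  have hsa : IsSelfAdjoint R := .of_nonneg hR
  have hc := (continuous_expNegInvGlue_div τ).continuousOn (s := spectrum ℝ R)
  have hcfc : R * invSemigroup R τ - R = cfc (fun t : ℝ => t * expNegInvGlue (t / τ) - t) R := by
    rw [cfc_sub (fun t : ℝ => t * expNegInvGlue (t / τ)) (fun t => t) R
      (continuousOn_id.mul hc) (by fun_prop), cfc_mul _ _ R (by fun_prop) hc,
      cfc_id' ℝ R, invSemigroup_of_pos R hτ]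
  rw [hcfc]
  exact norm_cfc_le hτ.le fun t ht =>
    abs_mul_expNegInvGlue_div_sub_le (mem_Icc_of_mem_spectrum hR ht).1 hτ

end InvSemigroup

section StrongContinuity

variable {E : Type*} [NormedAddCommGroup E] [InnerProductSpace ℂ E] [CompleteSpace E]

theorem denseRange_of_isSelfAdjoint_of_injective {R : E →L[ℂ] E} (hsa : IsSelfAdjoint R)
    (hinj : Function.Injective R) : DenseRange R := by
  have hker : R.ker = ⊥ := LinearMap.ker_eq_bot.2 hinj
  have h := ContinuousLinearMap.orthogonal_range R
  rwa [hsa.adjoint_eq, hker, ← Submodule.topologicalClosure_eq_top_iff,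
    ← Submodule.dense_iff_topologicalClosure_eq_top] at h

theorem tendsto_invSemigroup_apply_range {R : E →L[ℂ] E} (hR : 0 ≤ R) (a : E) :
    Tendsto (fun τ => invSemigroup R τ (R a)) (𝓝[≥] 0) (𝓝 (R a)) := by
  have hbound : Tendsto (fun τ : ℝ => τ * ‖a‖) (𝓝[≥] 0) (𝓝 0) :=
    ((continuous_mul_const ‖a‖).tendsto' 0 0 (zero_mul _)).mono_left nhdsWithin_le_nhds
  refine tendsto_iff_norm_sub_tendsto_zero.2 (squeeze_zero_norm' ?_ hbound)
  filter_upwards [self_mem_nhdsWithin] with τ hτ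
  have hcomm : invSemigroup R τ (R a) = (R * invSemigroup R τ) a :=
    congrArg (fun M : E →L[ℂ] E => M a) (commute_invSemigroup R τ).eq.symm
  rw [norm_norm, hcomm, ← sub_apply]
  exact ContinuousLinearMap.le_of_opNorm_le _ (norm_mul_invSemigroup_sub_le hR hτ) a

theorem tendsto_invSemigroup_apply {R : E →L[ℂ] E} (hR : 0 ≤ R) (hinj : Function.Injective R)
    (a : E) : Tendsto (fun τ => invSemigroup R τ a) (𝓝[≥] 0) (𝓝 a) := by
  have hequi : Equicontinuous fun τ => ⇑(invSemigroup R τ) :=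
    (LipschitzWith.uniformEquicontinuous _ 1 fun τ =>
      (invSemigroup R τ).lipschitzWith_of_opNorm_le
        (by exact_mod_cast norm_invSemigroup_le_one hR τ)).equicontinuous
  have hdense := denseRange_of_isSelfAdjoint_of_injective (.of_nonneg hR) hinj
  exact hdense.induction_on (p := fun a => Tendsto (fun τ => invSemigroup R τ a) (𝓝[≥] 0) (𝓝 a)) a
    (hequi.isClosed_setOfPred_tendsto continuous_id) (tendsto_invSemigroup_apply_range hR)

end StrongContinuity

section IsInvStrongSolutionOn

variable {E F : Type*} [NormedAddCommGroup E] [NormedSpace ℂ E] [NormedAddCommGroup F]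
  [NormedSpace ℂ F]

/-- `u` solves `u' = -T⁻¹ u + g` on `s` with a continuous derivative. The equation is multiplied
by the bounded operator `T`, so that neither an inverse of `T` nor its domain is mentioned. -/
def IsInvStrongSolutionOn (T : E →L[ℂ] E) (g u : ℝ → E) (s : Set ℝ) : Prop :=
  ∃ u' : ℝ → E, ContinuousOn u' s ∧ ∀ x ∈ s, HasDerivAt u (u' x) x ∧ u x = T (g x - u' x)

namespace IsInvStrongSolutionOn

variable {T : E →L[ℂ] E} {g h u v : ℝ → E} {s t : Set ℝ}

theorem mono (hu : IsInvStrongSolutionOn T g u t) (hst : s ⊆ t) : IsInvStrongSolutionOn T g u s :=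
  let ⟨u', hu', hsol⟩ := hu
  ⟨u', hu'.mono hst, fun x hx => hsol x (hst hx)⟩

theorem continuousOn (hu : IsInvStrongSolutionOn T g u s) : ContinuousOn u s :=
  let ⟨_, _, hsol⟩ := hu
  fun x hx => (hsol x hx).1.continuousAt.continuousWithinAt

theorem add (hu : IsInvStrongSolutionOn T g u s) (hv : IsInvStrongSolutionOn T h v s) :
    IsInvStrongSolutionOn T (g + h) (u + v) s := by
  obtain ⟨u', hu', hu⟩ := hu
  obtain ⟨v', hv', hv⟩ := hv
  refine ⟨u' + v', hu'.add hv', fun x hx => ⟨(hu x hx).1.add (hv x hx).1, ?_⟩⟩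
  simp only [Pi.add_apply, (hu x hx).2, (hv x hx).2, ← map_add]
  congr 1
  abel

theorem map {T' : F →L[ℂ] F} (M : E →L[ℂ] F) (hM : M.comp T = T'.comp M)
    (hu : IsInvStrongSolutionOn T g u s) : IsInvStrongSolutionOn T' (M ∘ g) (M ∘ u) s := by
  obtain ⟨u', hu', hu⟩ := hu
  refine ⟨M ∘ u', M.continuous.comp_continuousOn hu', fun x hx =>
    ⟨(M.restrictScalars ℝ).hasFDerivAt.comp_hasDerivAt x (hu x hx).1, ?_⟩⟩
  have hMT : M (T (g x - u' x)) = T' (M (g x - u' x)) := DFunLike.congr_fun hM _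
  simpa only [Function.comp_apply, (hu x hx).2, map_sub] using hMT

theorem comp_neg (hu : IsInvStrongSolutionOn T g u s) :
    IsInvStrongSolutionOn (-T) (fun x => -g (-x)) (fun x => u (-x)) (Neg.neg ⁻¹' s) := by
  obtain ⟨u', hu', hu⟩ := hu
  refine ⟨fun x => -u' (-x), (hu'.comp continuousOn_neg fun _ hx => hx).neg, fun x hx => ⟨?_, ?_⟩⟩
  · simpa [Function.comp_def] using (hu (-x) hx).1.scomp x (hasDerivAt_neg x)
  · change u (-x) = -T (-g (-x) - -u' (-x))
    rw [(hu (-x) hx).2, ← map_neg]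
    congr 1
    abel

end IsInvStrongSolutionOn

end IsInvStrongSolutionOn

section InvConv

variable {E : Type*} [NormedAddCommGroup E] [InnerProductSpace ℂ E] [CompleteSpace E]

/-- The convolution `x ↦ ∫₀^∞ exp (-τ R⁻¹) g (x - τ) dτ`, the bounded solution of
`v' = -R⁻¹ v + g` on the line. -/
def invConv (R : E →L[ℂ] E) (g : ℝ → E) (x : ℝ) : E :=
  ∫ τ in Ioi (0 : ℝ), invSemigroup R τ (g (x - τ))

/-- The derivative of `invConv R g`. Subtracting `g x` makes the integral converge at `τ = 0`,
where `invSemigroupDeriv R τ` has norm of order `τ⁻¹`. -/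
def invConvDeriv (R : E →L[ℂ] E) (g : ℝ → E) (x : ℝ) : E :=
  ∫ τ in Ioi (0 : ℝ), invSemigroupDeriv R τ (g (x - τ) - g x)

variable {R : E →L[ℂ] E} {γ γ' g : ℝ → E} {C C' : ℝ}

theorem integrableOn_exp_neg_decayRate_mul (R : E →L[ℂ] E) (C : ℝ) :
    IntegrableOn (fun τ => Real.exp (-(decayRate R * τ)) * C) (Ioi 0) := by
  simpa only [neg_mul, IntegrableOn] using
    (exp_neg_integrableOn_Ioi 0 (decayRate_pos R)).mul_const C

theorem norm_invSemigroup_apply_le (hR : 0 ≤ R) {a : E} {τ : ℝ} (hτ : 0 < τ) (ha : ‖a‖ ≤ C) :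
    ‖invSemigroup R τ a‖ ≤ Real.exp (-(decayRate R * τ)) * C :=
  (ContinuousLinearMap.le_of_opNorm_le _ (norm_invSemigroup_le_exp hR hτ) _).trans (by gcongr)

theorem ae_norm_invSemigroup_apply_le (hR : 0 ≤ R) (hγ : ∀ τ, ‖γ τ‖ ≤ C) :
    ∀ᵐ τ ∂volume.restrict (Ioi 0),
      ‖invSemigroup R τ (γ τ)‖ ≤ Real.exp (-(decayRate R * τ)) * C :=
  ae_restrict_of_forall_mem measurableSet_Ioi fun τ hτ =>
    norm_invSemigroup_apply_le hR hτ (hγ τ)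

theorem aestronglyMeasurable_invSemigroup_apply (hR : 0 ≤ R) (hγ : Continuous γ) :
    AEStronglyMeasurable (fun τ => invSemigroup R τ (γ τ)) (volume.restrict (Ioi 0)) :=
  ((continuousOn_invSemigroup hR).clm_apply hγ.continuousOn).aestronglyMeasurable
    measurableSet_Ioi

theorem integrableOn_invSemigroup_apply (hR : 0 ≤ R) (hγ : Continuous γ)
    (hC : ∀ τ, ‖γ τ‖ ≤ C) : IntegrableOn (fun τ => invSemigroup R τ (γ τ)) (Ioi 0) :=
  (integrableOn_exp_neg_decayRate_mul R C).mono' (aestronglyMeasurable_invSemigroup_apply hR hγ)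
    (ae_norm_invSemigroup_apply_le hR hC)

theorem tendsto_mul_invSemigroup_atTop (hR : 0 ≤ R) (hC : ∀ τ, ‖γ τ‖ ≤ C) :
    Tendsto (fun τ => (R * invSemigroup R τ) (γ τ)) atTop (𝓝 0) := by
  have hexp : Tendsto (fun τ => ‖R‖ * (Real.exp (-(decayRate R * τ)) * C)) atTop (𝓝 0) := by
    simpa using ((Real.tendsto_exp_neg_atTop_nhds_zero.comp
      (tendsto_id.const_mul_atTop (decayRate_pos R))).mul_const C).const_mul ‖R‖
  refine squeeze_zero_norm' ?_ hexp
  filter_upwards [Ioi_mem_atTop (0 : ℝ)] with τ hτ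
  exact (R.le_opNorm _).trans (by gcongr; exact norm_invSemigroup_apply_le hR hτ (hC τ))

theorem continuousWithinAt_mul_invSemigroup_zero (hR : 0 ≤ R) :
    ContinuousWithinAt (fun τ => R * invSemigroup R τ) (Ici 0) 0 := by
  rw [ContinuousWithinAt, invSemigroup_of_nonpos R le_rfl, mul_one,
    tendsto_iff_norm_sub_tendsto_zero]
  refine squeeze_zero' (g := fun τ => τ) (Eventually.of_forall fun _ => norm_nonneg _) ?_
    (tendsto_nhdsWithin_of_tendsto_nhds tendsto_id)
  filter_upwards [self_mem_nhdsWithin] with τ hτ using norm_mul_invSemigroup_sub_le hR hτ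

theorem integral_invSemigroup_apply_eq_add (hR : 0 ≤ R) (hγ : ∀ τ, HasDerivAt γ (γ' τ) τ)
    (hγ' : Continuous γ') (hC : ∀ τ, ‖γ τ‖ ≤ C) (hC' : ∀ τ, ‖γ' τ‖ ≤ C') :
    ∫ τ in Ioi (0 : ℝ), invSemigroup R τ (γ τ)
      = R (γ 0) + R (∫ τ in Ioi (0 : ℝ), invSemigroup R τ (γ' τ)) := by
  have hcont : Continuous γ := continuous_iff_continuousAt.2 fun τ => (hγ τ).continuousAt
  have hint := integrableOn_invSemigroup_apply hR hcont hC
  have hint' := integrableOn_invSemigroup_apply hR hγ' hC'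
  have hRint' : IntegrableOn (fun τ => R (invSemigroup R τ (γ' τ))) (Ioi 0) :=
    R.integrable_comp hint'
  have hderiv : ∀ τ ∈ Ioi (0 : ℝ), HasDerivAt (fun τ => (R * invSemigroup R τ) (γ τ))
      (-invSemigroup R τ (γ τ) + R (invSemigroup R τ (γ' τ))) τ := fun τ hτ => by
    simpa using ((ContinuousLinearMap.restrictScalarsL ℂ E E ℝ ℝ).hasFDerivAt.comp_hasDerivAt τ
      (hasDerivAt_mul_invSemigroup hR hτ)).clm_apply (hγ τ)
  have hftc := integral_Ioi_of_hasDerivAt_of_tendsto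
    ((continuousWithinAt_mul_invSemigroup_zero hR).clm_apply hcont.continuousWithinAt) hderiv
    (hint.neg.add hRint') (tendsto_mul_invSemigroup_atTop hR hC)
  rw [integral_add (f := fun τ => -invSemigroup R τ (γ τ)) hint.neg hRint', integral_neg,
    R.integral_comp_comm hint', invSemigroup_of_nonpos R le_rfl, mul_one, zero_sub,
    neg_add_eq_iff_eq_add] at hftc
  rw [hftc]
  abel

theorem integral_invSemigroup_apply_const (hR : 0 ≤ R) (a : E) :
    ∫ τ in Ioi (0 : ℝ), invSemigroup R τ a = R a := by
  simpa using integral_invSemigroup_apply_eq_add hR (C' := 0) (fun τ => hasDerivAt_const τ a)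
    continuous_const (fun _ => le_rfl) (by simp)

theorem norm_invConv_le (hR : 0 ≤ R) (hC : ∀ x, ‖g x‖ ≤ C) (x : ℝ) :
    ‖invConv R g x‖ ≤ ∫ τ in Ioi (0 : ℝ), Real.exp (-(decayRate R * τ)) * C :=
  norm_integral_le_of_norm_le (integrableOn_exp_neg_decayRate_mul R C)
    (ae_norm_invSemigroup_apply_le hR fun τ => hC (x - τ))

theorem continuous_invConv (hR : 0 ≤ R) (hg : Continuous g) (hC : ∀ x, ‖g x‖ ≤ C) :
    Continuous (invConv R g) :=
  continuous_of_dominated (fun _ => aestronglyMeasurable_invSemigroup_apply hR (by fun_prop))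
    (fun _ => ae_norm_invSemigroup_apply_le hR fun _ => hC _)
    (integrableOn_exp_neg_decayRate_mul R C) (Eventually.of_forall fun _ => by fun_prop)

theorem norm_invSemigroupDeriv_apply_le_rpow (hR : 0 ≤ R) {x τ : ℝ} (hτ : 0 < τ) {K r : ℝ≥0}
    {s : Set ℝ} (hg : HolderOnWith K r g s) (hx : x ∈ s) (hxτ : x - τ ∈ s) :
    ‖invSemigroupDeriv R τ (g (x - τ) - g x)‖ ≤ 2 * K * τ ^ ((r : ℝ) - 1) := by
  have hdist : ‖g (x - τ) - g x‖ ≤ K * τ ^ (r : ℝ) := by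
    simpa [dist_eq_norm, abs_of_pos hτ] using hg.dist_le hxτ hx
  have hexp : Real.exp (-(decayRate R / 2 * τ)) ≤ 1 := by
    have := decayRate_pos R
    exact Real.exp_le_one_iff.2 (neg_nonpos.2 (by positivity))
  calc ‖invSemigroupDeriv R τ (g (x - τ) - g x)‖
      ≤ 2 * τ⁻¹ * Real.exp (-(decayRate R / 2 * τ)) * (K * τ ^ (r : ℝ)) :=
        ContinuousLinearMap.le_of_opNorm_le_of_le _ (norm_invSemigroupDeriv_le hR hτ) hdist
    _ ≤ 2 * τ⁻¹ * 1 * (K * τ ^ (r : ℝ)) := by gcongr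
    _ = 2 * K * τ ^ ((r : ℝ) - 1) := by
        rw [Real.rpow_sub_one hτ.ne']
        field_simp

theorem norm_invSemigroupDeriv_apply_le_exp (hR : 0 ≤ R) {ε τ : ℝ} (hε : 0 < ε) (hετ : ε ≤ τ)
    {a b : E} (ha : ‖a‖ ≤ C) (hb : ‖b‖ ≤ C) :
    ‖invSemigroupDeriv R τ (a - b)‖ ≤ 4 * C * ε⁻¹ * Real.exp (-(decayRate R / 2) * τ) := by
  have hsub : ‖a - b‖ ≤ 2 * C := (norm_sub_le _ _).trans (by linarith)
  have hC : 0 ≤ C := (norm_nonneg a).trans ha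
  calc ‖invSemigroupDeriv R τ (a - b)‖
      ≤ 2 * τ⁻¹ * Real.exp (-(decayRate R / 2 * τ)) * (2 * C) :=
        ContinuousLinearMap.le_of_opNorm_le_of_le _
          (norm_invSemigroupDeriv_le hR (hε.trans_le hετ)) hsub
    _ ≤ 2 * ε⁻¹ * Real.exp (-(decayRate R / 2 * τ)) * (2 * C) := by gcongr
    _ = 4 * C * ε⁻¹ * Real.exp (-(decayRate R / 2) * τ) := by
        rw [neg_mul]
        ring

theorem integrableOn_indicator_rpow_add_exp {b ε r : ℝ} (hb : 0 < b) (hr : 0 < r) (K c : ℝ) :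
    IntegrableOn (fun τ => (Ioc 0 ε).indicator (fun τ => K * τ ^ (r - 1)) τ
      + c * Real.exp (-b * τ)) (Ioi 0) := by
  refine Integrable.add ?_ ((exp_neg_integrableOn_Ioi 0 hb).const_mul c)
  refine (IntegrableOn.integrable_indicator ?_ measurableSet_Ioc).integrableOn
  exact ((intervalIntegral.intervalIntegrable_rpow' (by linarith)).1).const_mul K

theorem exists_integrableOn_bound_invSemigroupDeriv (hR : 0 ≤ R) (hg : LocallyHolder g)
    (hC : ∀ x, ‖g x‖ ≤ C) (x₀ : ℝ) :
    ∃ bound : ℝ → ℝ, IntegrableOn bound (Ioi 0) ∧ ∀ᶠ x in 𝓝 x₀,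
      ∀ᵐ τ ∂volume.restrict (Ioi 0), ‖invSemigroupDeriv R τ (g (x - τ) - g x)‖ ≤ bound τ := by
  obtain ⟨K, r, hr, s, hs, hgs⟩ := hg x₀
  obtain ⟨δ, hδ, hball⟩ := Metric.mem_nhds_iff.1 hs
  have hC₀ : 0 ≤ C := (norm_nonneg _).trans (hC 0)
  refine ⟨_, integrableOn_indicator_rpow_add_exp (ε := δ / 2) (half_pos (decayRate_pos R))
    (NNReal.coe_pos.2 hr) (2 * K) (4 * C * (δ / 2)⁻¹), ?_⟩
  filter_upwards [Metric.ball_mem_nhds x₀ (half_pos hδ)] with x hx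
  refine ae_restrict_of_forall_mem measurableSet_Ioi fun τ hτ => ?_
  rw [mem_Ioi] at hτ
  rw [Metric.mem_ball, Real.dist_eq, abs_lt] at hx
  rcases le_or_gt τ (δ / 2) with hle | hlt
  · rw [indicator_of_mem (mem_Ioc.2 ⟨hτ, hle⟩)]
    have hmem : ∀ y, x₀ - δ < y → y < x₀ + δ → y ∈ s := fun y h₁ h₂ =>
      hball (by rw [Metric.mem_ball, Real.dist_eq, abs_lt]; constructor <;> linarith)
    exact (norm_invSemigroupDeriv_apply_le_rpow hR hτ hgs (hmem _ (by linarith) (by linarith))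
      (hmem _ (by linarith) (by linarith))).trans (le_add_of_nonneg_right (by positivity))
  · rw [indicator_of_notMem fun h => hlt.not_ge h.2, zero_add]
    exact norm_invSemigroupDeriv_apply_le_exp hR (half_pos hδ) hlt.le (hC _) (hC _)

theorem aestronglyMeasurable_invSemigroupDeriv_apply (hR : 0 ≤ R) (hγ : Continuous γ) :
    AEStronglyMeasurable (fun τ => invSemigroupDeriv R τ (γ τ)) (volume.restrict (Ioi 0)) :=
  ((continuousOn_invSemigroupDeriv hR).clm_apply hγ.continuousOn).aestronglyMeasurable
    measurableSet_Ioi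

theorem continuous_invConvDeriv (hR : 0 ≤ R) (hg : LocallyHolder g) (hC : ∀ x, ‖g x‖ ≤ C) :
    Continuous (invConvDeriv R g) := by
  have hgc := hg.continuous
  refine continuous_iff_continuousAt.2 fun x₀ => ?_
  obtain ⟨bound, hint, hle⟩ := exists_integrableOn_bound_invSemigroupDeriv hR hg hC x₀
  exact continuousAt_of_dominated
    (Eventually.of_forall fun x => aestronglyMeasurable_invSemigroupDeriv_apply hR (by fun_prop))
    hle hint (Eventually.of_forall fun τ => by fun_prop)

theorem invConv_eq_apply_sub_invConvDeriv (hR : 0 ≤ R) (hg : LocallyHolder g)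
    (hC : ∀ x, ‖g x‖ ≤ C) (x : ℝ) : invConv R g x = R (g x - invConvDeriv R g x) := by
  have hgc := hg.continuous
  obtain ⟨bound, hbound, hle⟩ := exists_integrableOn_bound_invSemigroupDeriv hR hg hC x
  have hint : IntegrableOn (fun τ => invSemigroupDeriv R τ (g (x - τ) - g x)) (Ioi 0) :=
    hbound.mono' (aestronglyMeasurable_invSemigroupDeriv_apply hR (by fun_prop)) hle.self_of_nhds
  have hRderiv : R (invConvDeriv R g x)
      = ∫ τ in Ioi (0 : ℝ), (invSemigroup R τ (g x) - invSemigroup R τ (g (x - τ))) := by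
    rw [invConvDeriv, ← R.integral_comp_comm hint]
    refine setIntegral_congr_fun measurableSet_Ioi fun τ hτ => ?_
    simpa using DFunLike.congr_fun (mul_invSemigroupDeriv hR hτ) (g (x - τ) - g x)
  rw [integral_sub (integrableOn_invSemigroup_apply hR continuous_const fun _ => hC x)
    (integrableOn_invSemigroup_apply hR (by fun_prop) fun τ => hC (x - τ)),
    integral_invSemigroup_apply_const hR, ← invConv] at hRderiv
  rw [map_sub, hRderiv, sub_sub_cancel]

theorem norm_sub_le_of_hasDerivAt {F : Type*} [NormedAddCommGroup F] [NormedSpace ℝ F]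
    {G g : ℝ → F} (hG : ∀ y, HasDerivAt G (g y) y)
    (hC : ∀ y, ‖g y‖ ≤ C) (y z : ℝ) : ‖G y - G z‖ ≤ C * ‖y - z‖ :=
  convex_univ.norm_image_sub_le_of_norm_hasDerivWithin_le
    (fun w _ => (hG w).hasDerivWithinAt) (fun w _ => hC w) (mem_univ z) (mem_univ y)

theorem hasDerivAt_integral_invSemigroup_apply_sub (hR : 0 ≤ R) {G : ℝ → E}
    (hG : ∀ y, HasDerivAt G (g y) y) (hg : Continuous g) (hC : ∀ y, ‖g y‖ ≤ C) (x : ℝ) :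
    HasDerivAt (fun y => ∫ τ in Ioi (0 : ℝ), invSemigroup R τ (G (y - τ) - G (-τ)))
      (invConv R g x) x := by
  have hGc : Continuous G := continuous_iff_continuousAt.2 fun y => (hG y).continuousAt
  refine (hasDerivAt_integral_of_dominated_loc_of_deriv_le (s := univ) univ_mem
    (F := fun y τ => invSemigroup R τ (G (y - τ) - G (-τ)))
    (F' := fun y τ => invSemigroup R τ (g (y - τ)))
    (Eventually.of_forall fun y => aestronglyMeasurable_invSemigroup_apply hR (by fun_prop))
    (integrableOn_invSemigroup_apply hR (C := C * ‖x‖) (by fun_prop) fun τ => ?_)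
    (aestronglyMeasurable_invSemigroup_apply hR (by fun_prop))
    (ae_restrict_of_forall_mem measurableSet_Ioi fun τ hτ y _ =>
      norm_invSemigroup_apply_le hR hτ (hC _))
    (integrableOn_exp_neg_decayRate_mul R C)
    (Eventually.of_forall fun τ y _ => ?_)).2
  · simpa using norm_sub_le_of_hasDerivAt hG hC (x - τ) (-τ)
  · exact ((invSemigroup R τ).restrictScalars ℝ).hasFDerivAt.comp_hasDerivAt y
      (((hG (y - τ)).comp_sub_const y τ).sub_const _)

/-- Integration by parts turns the convolution with a primitive `G` of `g`, which is
differentiable by dominated convergence, into `R (invConv R g)`. Subtracting `G (-τ)` keeps the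
integrand bounded. -/
theorem hasDerivAt_apply_invConv (hR : 0 ≤ R) (hg : Continuous g) (hC : ∀ x, ‖g x‖ ≤ C) (x : ℝ) :
    HasDerivAt (fun y => R (invConv R g y)) (R (g x) - invConv R g x) x := by
  obtain ⟨G, hG⟩ : ∃ G : ℝ → E, ∀ y, HasDerivAt G (g y) y :=
    ⟨fun y => ∫ s in (0 : ℝ)..y, g s, fun y => intervalIntegral.integral_hasDerivAt_right
      (hg.intervalIntegrable _ _) (hg.stronglyMeasurableAtFilter _ _) hg.continuousAt⟩
  have hparts : ∀ y, R (invConv R g y) = R (G y) - R (G 0) + R (invConv R g 0)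
      - ∫ τ in Ioi (0 : ℝ), invSemigroup R τ (G (y - τ) - G (-τ)) := fun y => by
    have hneg : Continuous fun τ => g (-τ) - g (y - τ) := by fun_prop
    have hderiv : ∀ τ, HasDerivAt (fun τ => G (y - τ) - G (-τ)) (g (-τ) - g (y - τ)) τ :=
      fun τ => by
        convert ((hG (y - τ)).comp_const_sub y τ).sub ((hG (0 - τ)).comp_const_sub 0 τ) using 1
        · simp [Pi.sub_def]
        · rw [zero_sub]
          abel
    have hbound : ∀ τ, ‖G (y - τ) - G (-τ)‖ ≤ C * ‖y‖ := fun τ => by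
      simpa using norm_sub_le_of_hasDerivAt hG hC (y - τ) (-τ)
    have hbound' : ∀ τ, ‖g (-τ) - g (y - τ)‖ ≤ C + C := fun τ => norm_sub_le_of_le (hC _) (hC _)
    have hint : ∀ z, IntegrableOn (fun τ => invSemigroup R τ (g (z - τ))) (Ioi 0) := fun z =>
      integrableOn_invSemigroup_apply hR (by fun_prop) fun τ => hC (z - τ)
    rw [integral_invSemigroup_apply_eq_add hR hderiv hneg hbound hbound']
    have hsub : ∫ τ in Ioi (0 : ℝ), invSemigroup R τ (g (-τ) - g (y - τ))
        = invConv R g 0 - invConv R g y := by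
      simpa only [map_sub, zero_sub, invConv] using integral_sub (hint 0) (hint y)
    rw [hsub, sub_zero, neg_zero, map_sub, map_sub]
    abel
  rw [funext hparts]
  have hRG := (R.restrictScalars ℝ).hasFDerivAt.comp_hasDerivAt x (hG x)
  exact (((hRG.sub_const _).add_const _).sub
    (hasDerivAt_integral_invSemigroup_apply_sub hR hG hg hC x))

theorem hasDerivAt_invConv (hR : 0 ≤ R) (hinj : Function.Injective R) (hg : LocallyHolder g)
    (hC : ∀ x, ‖g x‖ ≤ C) (x : ℝ) : HasDerivAt (invConv R g) (invConvDeriv R g x) x := by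
  have hgc := hg.continuous
  have hcont := continuous_invConv hR hgc hC
  have hcont' := continuous_invConvDeriv hR hg hC
  have hprim : ∀ y, invConv R g y = invConv R g 0 + ∫ s in (0 : ℝ)..y, invConvDeriv R g s := by
    refine fun y => hinj ?_
    have hftc := intervalIntegral.integral_eq_sub_of_hasDerivAt (a := 0) (b := y)
      (fun z _ => hasDerivAt_apply_invConv hR hgc hC z)
      (Continuous.intervalIntegrable (by fun_prop) _ _)
    have hderiv : ∀ z, R (g z) - invConv R g z = R (invConvDeriv R g z) := fun z => by
      rw [invConv_eq_apply_sub_invConvDeriv hR hg hC, map_sub, sub_sub_cancel]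
    simp only [hderiv] at hftc
    rw [R.intervalIntegral_comp_comm (hcont'.intervalIntegrable _ _)] at hftc
    rw [map_add, hftc, add_sub_cancel]
  rw [funext hprim]
  exact (intervalIntegral.integral_hasDerivAt_right (hcont'.intervalIntegrable 0 x)
    (hcont'.stronglyMeasurableAtFilter _ _) hcont'.continuousAt).const_add _

theorem isInvStrongSolutionOn_invConv (hR : 0 ≤ R) (hinj : Function.Injective R)
    (hg : LocallyHolder g) (hC : ∀ x, ‖g x‖ ≤ C) :
    IsInvStrongSolutionOn R g (invConv R g) univ :=
  ⟨invConvDeriv R g, (continuous_invConvDeriv hR hg hC).continuousOn, fun x _ =>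
    ⟨hasDerivAt_invConv hR hinj hg hC x, invConv_eq_apply_sub_invConvDeriv hR hg hC x⟩⟩

end InvConv

section HalfLine

variable {E : Type*} [NormedAddCommGroup E] [InnerProductSpace ℂ E] [CompleteSpace E]
  {R T P : E →L[ℂ] E} {g : ℝ → E} {C : ℝ}

theorem isInvStrongSolutionOn_invSemigroup_apply (hR : 0 ≤ R) (a : E) :
    IsInvStrongSolutionOn R 0 (fun x => invSemigroup R x a) (Ioi 0) := by
  refine ⟨fun x => invSemigroupDeriv R x a,
    (continuousOn_invSemigroupDeriv hR).clm_apply continuousOn_const, fun x hx => ⟨?_, ?_⟩⟩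
  · simpa using ((ContinuousLinearMap.restrictScalarsL ℂ E E ℝ ℝ).hasFDerivAt.comp_hasDerivAt x
      (hasDerivAt_invSemigroup hR hx)).clm_apply (hasDerivAt_const x a)
  · have hmul : R (invSemigroupDeriv R x a) = -invSemigroup R x a :=
      DFunLike.congr_fun (mul_invSemigroupDeriv hR hx) a
    simp [hmul]

theorem continuousOn_invSemigroup_apply (hR : 0 ≤ R) (hinj : Function.Injective R) (a : E) :
    ContinuousOn (fun x => invSemigroup R x a) (Ici 0) := by
  intro x hx
  rcases (mem_Ici.1 hx).eq_or_lt with rfl | hpos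
  · simpa [ContinuousWithinAt, invSemigroup_of_nonpos R le_rfl] using
      tendsto_invSemigroup_apply hR hinj a
  · exact ((isInvStrongSolutionOn_invSemigroup_apply hR a).continuousOn.continuousAt
      (Ioi_mem_nhds hpos)).continuousWithinAt

theorem exists_bounded_isInvStrongSolutionOn_Ioi_of_nonneg (hR : 0 ≤ R)
    (hinj : Function.Injective R) (hg : LocallyHolder g) (hC : ∀ x, ‖g x‖ ≤ C) (a : E) :
    ∃ u, ContinuousOn u (Ici 0) ∧ IsInvStrongSolutionOn R g u (Ioi 0) ∧ u 0 = a ∧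
      ∃ D, ∀ x ∈ Ici (0 : ℝ), ‖u x‖ ≤ D := by
  refine ⟨(fun x => invSemigroup R x (a - invConv R g 0)) + invConv R g,
    (continuousOn_invSemigroup_apply hR hinj _).add
      (continuous_invConv hR hg.continuous hC).continuousOn, ?_, ?_,
    1 * ‖a - invConv R g 0‖ + ∫ τ in Ioi (0 : ℝ), Real.exp (-(decayRate R * τ)) * C,
    fun x _ => norm_add_le_of_le ?_ (norm_invConv_le hR hC x)⟩
  · simpa using (isInvStrongSolutionOn_invSemigroup_apply hR (a - invConv R g 0)).add
      ((isInvStrongSolutionOn_invConv hR hinj hg hC).mono (subset_univ _))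
  · simp [invSemigroup_of_nonpos R le_rfl]
  · exact (invSemigroup R x).le_of_opNorm_le (norm_invSemigroup_le_one hR x) _

/-- On the range of `P` the equation is parabolic forwards, so a solution on the half-line may
start from any `a` there. On the range of `1 - P` it is parabolic backwards, and the bounded
solution on the whole line is used. -/
theorem exists_bounded_isInvStrongSolutionOn_Ioi (hP : IsIdempotentElem P) (hPT : Commute P T)
    (hR : 0 ≤ T * (2 * P - 1)) (hinj : Function.Injective T) (hg : LocallyHolder g)
    (hC : ∀ x, ‖g x‖ ≤ C) :
    ∃ b, ∀ a, P a = a → ∃ χ, ContinuousOn χ (Ici 0) ∧ IsInvStrongSolutionOn T g χ (Ioi 0) ∧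
      χ 0 = a + b ∧ ∃ D, ∀ x ∈ Ici (0 : ℝ), ‖χ x‖ ≤ D := by
  set R := T * (2 * P - 1) with hRdef
  set Q := 1 - P with hQdef
  have hPR : P * R = T * P := by
    rw [hRdef, ← mul_assoc, hPT.eq, mul_assoc, mul_sub, mul_one, two_mul, mul_add, hP.eq,
      add_sub_cancel_right]
  have hQR : Q * -R = T * Q := by
    rw [hQdef, mul_neg, sub_mul, hPR, hRdef]
    noncomm_ring
  have hTR : (2 * P - 1) * R = T := by
    rw [sub_mul, mul_assoc, hPR, hRdef]
    noncomm_ring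
  have hRinj : Function.Injective R :=
    Function.Injective.of_comp (f := ⇑(2 * P - 1)) (by
      rwa [← ContinuousLinearMap.coe_comp, ← ContinuousLinearMap.mul_def, hTR])
  have hPQ : ∀ z, P z + Q z = z := fun z => by simp [hQdef]
  have hneg : LocallyHolder fun x => -g (-x) :=
    (hg.comp_lipschitzWith LipschitzWith.id.neg).lipschitzWith_comp LipschitzWith.id.neg
  have hCneg : ∀ x, ‖-g (-x)‖ ≤ C := fun x => by simpa using hC (-x)
  set v := invConv R fun x => -g (-x)
  have hv : IsInvStrongSolutionOn T (Q ∘ g) (Q ∘ fun x => v (-x)) (Ioi 0) := by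
    simpa using (((isInvStrongSolutionOn_invConv hR hRinj hneg hCneg).comp_neg).map Q hQR).mono
      (subset_univ _)
  have hvc : Continuous v := continuous_invConv hR hneg.continuous hCneg
  refine ⟨Q (v 0), fun a ha => ?_⟩
  obtain ⟨u, huc, hu, rfl, D, hD⟩ :=
    exists_bounded_isInvStrongSolutionOn_Ioi_of_nonneg hR hRinj hg hC a
  refine ⟨P ∘ u + Q ∘ fun x => v (-x), (P.continuous.comp_continuousOn huc).add
    (Q.continuous.comp (hvc.comp continuous_neg)).continuousOn, ?_, by simp [ha], _, fun x hx =>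
      norm_add_le_of_le (P.le_of_opNorm_le_of_le le_rfl (hD x hx))
        (Q.le_of_opNorm_le_of_le le_rfl (norm_invConv_le hR hCneg (-x)))⟩
  simpa [Pi.add_def, hPQ] using (hu.map P hPR).add hv

end HalfLine

section PosSpectralProj

variable {A : Type*} [CStarAlgebra A] {T W : A}

/-- The spectral projection of a self-adjoint element onto the positive half-line. It is only
meaningful when `0` is isolated in the spectrum, since otherwise the indicator function is not
continuous there and `cfc` returns `0`. -/
def posSpectralProj (W : A) : A :=
  cfc (fun t : ℝ => if 0 < t then 1 else 0) W

theorem continuousOn_ite_pos_spectrum (hW : IsUnit W) :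
    ContinuousOn (fun t : ℝ => if 0 < t then (1 : ℝ) else 0) (spectrum ℝ W) := by
  refine continuousOn_of_forall_continuousAt fun t ht => ?_
  rcases (spectrum.ne_zero_of_mem_of_unit (a := hW.unit) ht).lt_or_gt with hneg | hpos
  · refine (continuousAt_const (y := (0 : ℝ))).congr ?_
    filter_upwards [Iio_mem_nhds hneg] with s hs using (if_neg (mem_Iio.1 hs).not_gt).symm
  · refine (continuousAt_const (y := (1 : ℝ))).congr ?_
    filter_upwards [Ioi_mem_nhds hpos] with s hs using (if_pos hs).symm

theorem isIdempotentElem_posSpectralProj (hW : IsUnit W) :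
    IsIdempotentElem (posSpectralProj W) := by
  have hcont := continuousOn_ite_pos_spectrum hW
  rw [IsIdempotentElem, posSpectralProj, ← cfc_mul _ _ W hcont hcont]
  exact cfc_congr fun t _ => by split_ifs <;> simp

theorem commute_posSpectralProj (hWT : Commute W T) : Commute (posSpectralProj W) T :=
  hWT.cfc_real _

variable [PartialOrder A] [StarOrderedRing A]

theorem le_mul_posSpectralProj (hsa : IsSelfAdjoint W) (hW : IsUnit W) :
    W ≤ W * posSpectralProj W := by
  have hcont := continuousOn_ite_pos_spectrum hW
  calc W = cfc (fun t : ℝ => t) W := (cfc_id' ℝ W).symm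
    _ ≤ cfc (fun t : ℝ => t * if 0 < t then 1 else 0) W := by
        refine cfc_mono (fun t _ => ?_) (by fun_prop) (continuousOn_id.mul hcont)
        split_ifs <;> linarith
    _ = W * posSpectralProj W := by
        rw [cfc_mul (fun t : ℝ => t) _ W (by fun_prop) hcont, cfc_id' ℝ W, posSpectralProj]

/-- The sign `2 * posSpectralProj W - 1` of `W` is `W` times the nonnegative element `|W|⁻¹`. -/
theorem nonneg_mul_two_posSpectralProj_sub_one (hsa : IsSelfAdjoint W) (hW : IsUnit W)
    (hcomm : Commute W T) (hWT : 0 ≤ W * T) : 0 ≤ T * (2 * posSpectralProj W - 1) := by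
  have hcont := continuousOn_ite_pos_spectrum hW
  have hne : ∀ t ∈ spectrum ℝ W, t ≠ 0 := fun t ht =>
    spectrum.ne_zero_of_mem_of_unit (a := hW.unit) ht
  have hinv : ContinuousOn (fun t : ℝ => |t|⁻¹) (spectrum ℝ W) :=
    continuousOn_id.abs.inv₀ fun t ht => abs_ne_zero.2 (hne t ht)
  have hsign : 2 * posSpectralProj W - 1 = W * cfc (fun t : ℝ => |t|⁻¹) W := by
    nth_rw 2 [← cfc_id' ℝ W]
    rw [← cfc_mul _ _ W (by fun_prop) hinv, posSpectralProj, two_mul, ← cfc_add W _ _ hcont hcont,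
      ← cfc_const_one ℝ W, ← cfc_sub _ _ W (hcont.fun_add hcont) continuousOn_const]
    refine cfc_congr fun t ht => ?_
    rcases (hne t ht).lt_or_gt with hneg | hpos
    · simp [hneg.not_gt, abs_of_neg hneg, hneg.ne]
    · simp [hpos, abs_of_pos hpos, hpos.ne']
  rw [hsign, ← mul_assoc, ← hcomm.eq]
  refine Commute.mul_nonneg hWT (cfc_nonneg fun t _ => by positivity) ?_
  exact (((Commute.refl W).mul_left hcomm.symm).symm.cfc_real _).symm

end PosSpectralProj

section BoundedRightInverse

variable {𝕜 E F : Type*} [RCLike 𝕜] [NormedAddCommGroup E] [InnerProductSpace 𝕜 E]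
  [NormedAddCommGroup F]

/-- `T` is an everywhere defined bounded right inverse of the unbounded operator `A`. -/
def IsBoundedRightInverse [NormedSpace 𝕜 F] (A : E →ₗ.[𝕜] F) (T : F →L[𝕜] E) : Prop :=
  ∀ y, ∃ h : T y ∈ A.domain, A ⟨T y, h⟩ = y

theorem isClosed_range_of_isClosed_of_mul_norm_le [NormedSpace 𝕜 F] [CompleteSpace E]
    [CompleteSpace F] {A : E →ₗ.[𝕜] F} (hA : A.IsClosed) {c : ℝ} (hc : 0 < c)
    (hle : ∀ x : A.domain, c * ‖(x : E)‖ ≤ ‖A x‖) : IsClosed (range A) := by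
  have : CompleteSpace A.graph := hA.completeSpace_coe
  set q : A.graph →L[𝕜] F := (ContinuousLinearMap.snd 𝕜 E F).comp A.graph.subtypeL
  have hanti : AntilipschitzWith (max c⁻¹ 1).toNNReal q := by
    refine q.antilipschitz_of_bound fun ⟨⟨x, y⟩, hxy⟩ => ?_
    obtain ⟨z, rfl, rfl⟩ := A.mem_graph_iff.1 hxy
    rw [Real.coe_toNNReal _ (by positivity)]
    change max ‖(z : E)‖ ‖A z‖ ≤ max c⁻¹ 1 * ‖A z‖
    refine max_le ?_ (le_mul_of_one_le_left (norm_nonneg _) (le_max_right _ _))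
    calc ‖(z : E)‖ ≤ c⁻¹ * ‖A z‖ := (le_inv_mul_iff₀ hc).2 (hle z)
      _ ≤ max c⁻¹ 1 * ‖A z‖ := by gcongr; exact le_max_left _ _
  have hrange : range q = range A := by
    ext y
    constructor
    · rintro ⟨⟨p, hp⟩, rfl⟩
      obtain ⟨z, -, hz⟩ := A.mem_graph_iff.1 hp
      exact ⟨z, hz⟩
    · rintro ⟨z, rfl⟩
      exact ⟨⟨_, A.mem_graph z⟩, rfl⟩
  exact hrange ▸ hanti.isClosed_range q.uniformContinuous

theorem exists_apply_eq_zero_of_mem_orthogonal_range [CompleteSpace E] {A : E →ₗ.[𝕜] E}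
    (hA : IsSelfAdjoint A) {y : E} (hy : y ∈ A.toFun.rangeᗮ) :
    ∃ h : y ∈ A.domain, A ⟨y, h⟩ = 0 := by
  have hzero : ∀ x : A.domain, inner 𝕜 (0 : E) (x : E) = inner 𝕜 y (A x) := fun x => by
    rw [inner_zero_left]
    exact ((Submodule.mem_orthogonal' _ _).1 hy _ ⟨x, rfl⟩).symm
  rw [← LinearPMap.isSelfAdjoint_def.1 hA]
  have hdom := LinearPMap.mem_adjoint_domain_of_exists y ⟨0, hzero⟩
  exact ⟨hdom, LinearPMap.adjoint_apply_eq hA.dense_domain ⟨y, hdom⟩ hzero⟩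

theorem surjective_of_isSelfAdjoint_of_mul_norm_le [CompleteSpace E] {A : E →ₗ.[𝕜] E}
    (hA : IsSelfAdjoint A) {c : ℝ} (hc : 0 < c) (hle : ∀ x : A.domain, c * ‖(x : E)‖ ≤ ‖A x‖) :
    Function.Surjective A := by
  have : CompleteSpace A.toFun.range :=
    (isClosed_range_of_isClosed_of_mul_norm_le hA.isClosed hc hle).completeSpace_coe
  refine LinearMap.range_eq_top.1 ((Submodule.orthogonal_eq_bot_iff).1 ?_)
  refine (Submodule.eq_bot_iff _).2 fun y hy => ?_
  obtain ⟨hdom, hAy⟩ := exists_apply_eq_zero_of_mem_orthogonal_range hA hy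
  have hcy : c * ‖y‖ ≤ 0 := by simpa [hAy] using hle ⟨y, hdom⟩
  exact norm_le_zero_iff.1 (nonpos_of_mul_nonpos_right hcy hc)

theorem exists_isBoundedRightInverse_of_mul_norm_le [NormedSpace 𝕜 F] {A : E →ₗ.[𝕜] F} {c : ℝ}
    (hc : 0 < c) (hle : ∀ x : A.domain, c * ‖(x : E)‖ ≤ ‖A x‖) (hsurj : Function.Surjective A) :
    ∃ T, IsBoundedRightInverse A T := by
  have hker : A.toFun.ker = ⊥ := by
    refine LinearMap.ker_eq_bot'.2 fun x hx => Subtype.ext (norm_le_zero_iff.1 ?_)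
    have hcx : c * ‖(x : E)‖ ≤ ‖A.toFun x‖ := hle x
    rw [hx, norm_zero] at hcx
    exact nonpos_of_mul_nonpos_right hcx hc
  let e := LinearEquiv.ofBijective A.toFun ⟨LinearMap.ker_eq_bot.1 hker, hsurj⟩
  have he : ∀ y, A (e.symm y) = y := e.apply_symm_apply
  refine ⟨(A.domain.subtype ∘ₗ e.symm.toLinearMap).mkContinuous c⁻¹ fun y => ?_,
    fun y => ⟨(e.symm y).2, he y⟩⟩
  simpa [he] using (le_inv_mul_iff₀ hc).2 (hle (e.symm y))

theorem mul_norm_le_of_mul_sq_le_re_inner {c : ℝ} {x y : E}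
    (hle : c * ‖x‖ ^ 2 ≤ RCLike.re (inner 𝕜 y x)) : c * ‖x‖ ≤ ‖y‖ := by
  rcases (norm_nonneg x).eq_or_lt with hx | hx
  · simp [← hx]
  · refine le_of_mul_le_mul_right ?_ hx
    calc c * ‖x‖ * ‖x‖ = c * ‖x‖ ^ 2 := by ring
      _ ≤ ‖y‖ * ‖x‖ := hle.trans (re_inner_le_norm y x)

theorem exists_isBoundedRightInverse_of_mul_sq_le_re_inner [CompleteSpace E] {A : E →ₗ.[𝕜] E}
    (hA : IsSelfAdjoint A) {c : ℝ} (hc : 0 < c)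
    (hle : ∀ x : A.domain, c * ‖(x : E)‖ ^ 2 ≤ RCLike.re (inner 𝕜 (A x) (x : E))) :
    ∃ T, IsBoundedRightInverse A T :=
  have hle' : ∀ x : A.domain, c * ‖(x : E)‖ ≤ ‖A x‖ := fun x =>
    mul_norm_le_of_mul_sq_le_re_inner (hle x)
  exists_isBoundedRightInverse_of_mul_norm_le hc hle'
    (surjective_of_isSelfAdjoint_of_mul_norm_le hA hc hle')

namespace IsBoundedRightInverse

variable {A : E →ₗ.[𝕜] E} {T : E →L[𝕜] E}

protected theorem injective (hT : IsBoundedRightInverse A T) : Function.Injective T := by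
  intro y z hyz
  obtain ⟨hy, hAy⟩ := hT y
  obtain ⟨hz, hAz⟩ := hT z
  rw [← hAy, ← hAz]
  simp only [hyz]

variable [CompleteSpace E]

protected theorem isSelfAdjoint (hT : IsBoundedRightInverse A T) (hA : IsSelfAdjoint A) :
    IsSelfAdjoint T := by
  refine T.isSelfAdjoint_iff_isSymmetric.2 fun y z => ?_
  obtain ⟨hy, hAy⟩ := hT y
  obtain ⟨hz, hAz⟩ := hT z
  have hformal := LinearPMap.adjoint_isFormalAdjoint (T := A) hA.dense_domain
  rw [LinearPMap.isSelfAdjoint_def.1 hA] at hformal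
  have hinner := hformal ⟨T y, hy⟩ ⟨T z, hz⟩
  rw [hAy, hAz] at hinner
  exact hinner.symm

protected theorem nonneg (hT : IsBoundedRightInverse A T) (hA : IsSelfAdjoint A)
    (hpos : ∀ x : A.domain, 0 ≤ RCLike.re (inner 𝕜 (A x) (x : E))) : 0 ≤ T := by
  rw [T.nonneg_iff_isPositive, ContinuousLinearMap.isPositive_def]
  refine ⟨T.isSelfAdjoint_iff_isSymmetric.1 (hT.isSelfAdjoint hA), fun y => ?_⟩
  obtain ⟨hy, hAy⟩ := hT y
  have hinner := hpos ⟨T y, hy⟩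
  rwa [hAy, inner_re_symm] at hinner

end IsBoundedRightInverse

theorem IsBoundedRightInverse.conj {E F : Type*} [NormedAddCommGroup E] [InnerProductSpace 𝕜 E]
    [NormedAddCommGroup F] [InnerProductSpace 𝕜 F] {A : F →ₗ.[𝕜] F} {B : E →ₗ.[𝕜] E}
    {T : E →L[𝕜] E} (hT : IsBoundedRightInverse B T) (S : E ≃L[𝕜] F)
    (hdom : ∀ x ∈ B.domain, S x ∈ A.domain)
    (hAB : ∀ (x : B.domain) (hx : S x ∈ A.domain), A ⟨S x, hx⟩ = S (B x)) :
    IsBoundedRightInverse A ((S : E →L[𝕜] F) ∘L T ∘L (S.symm : F →L[𝕜] E)) := by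
  intro y
  obtain ⟨hx, hBx⟩ := hT (S.symm y)
  refine ⟨hdom _ hx, (hAB ⟨_, hx⟩ (hdom _ hx)).trans ?_⟩
  rw [hBx, S.apply_symm_apply]

theorem IsBoundedRightInverse.pmapComp {E : Type*} [NormedAddCommGroup E] [InnerProductSpace ℂ E]
    {J N : E →L[ℂ] E} {L : E →ₗ.[ℂ] E} (hN : IsBoundedRightInverse L N) (hJ : J * J = 1) :
    IsBoundedRightInverse (pmapComp J L) (N * J) := by
  intro y
  obtain ⟨hy, hLy⟩ := hN (J y)
  refine ⟨hy, ?_⟩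
  change J (L ⟨N (J y), hy⟩) = y
  rw [hLy]
  exact DFunLike.congr_fun hJ y

theorem IsInvStrongSolutionOn.isStrongSolutionOn {E : Type*} [NormedAddCommGroup E]
    [InnerProductSpace ℂ E] {B : E →ₗ.[ℂ] E} {T : E →L[ℂ] E} (hT : IsBoundedRightInverse B T)
    {g u : ℝ → E} {s : Set ℝ} (hu : IsInvStrongSolutionOn T g u s) :
    IsStrongSolutionOn B g u s := by
  obtain ⟨u', hu', hsol⟩ := hu
  refine ⟨u', hu', fun x hx => ⟨(hsol x hx).1, ?_⟩⟩
  obtain ⟨hdom, hB⟩ := hT (g x - u' x)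
  rw [← (hsol x hx).2] at hdom
  refine ⟨hdom, ?_⟩
  simp only [(hsol x hx).2, hB]
  abel

end BoundedRightInverse

section SignatureOperator

variable {𝕜 E : Type*} [RCLike 𝕜] [NormedAddCommGroup E] [InnerProductSpace 𝕜 E]

theorem exists_mem_starProjection_apply_eq {K : Submodule 𝕜 E} [CompleteSpace K] {M : E →L[𝕜] E}
    {c : ℝ} (hc : 0 < c) (hM : ∀ x ∈ K, c * ‖x‖ ^ 2 ≤ RCLike.re (inner 𝕜 (M x) x)) {y : E}
    (hy : y ∈ K) : ∃ x ∈ K, K.starProjection (M x) = y := by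
  lift c to ℝ≥0 using hc.le
  set Mc : K →L[𝕜] K := K.orthogonalProjectionOnto ∘L M ∘L K.subtypeL
  have hcoercive : ∀ x : K, ‖x‖ ^ 2 * c ≤ ‖inner 𝕜 (Mc x) x‖ := fun x => by
    calc ‖x‖ ^ 2 * c = c * ‖(x : E)‖ ^ 2 := by rw [mul_comm, Submodule.coe_norm]
      _ ≤ RCLike.re (inner 𝕜 (M x) (x : E)) := hM x x.2
      _ = RCLike.re (inner 𝕜 (Mc x) x) := by
        rw [← K.inner_orthogonalProjectionOnto_eq_of_mem_right]; rfl
      _ ≤ ‖inner 𝕜 (Mc x) x‖ := RCLike.re_le_norm _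
  have hunit : IsUnit Mc := Mc.isUnit_of_forall_le_norm_inner_map hc hcoercive
  obtain ⟨x, hx⟩ := (ContinuousLinearMap.isUnit_iff_bijective.1 hunit).2 ⟨y, hy⟩
  exact ⟨x, x.2, congrArg Subtype.val hx⟩

theorem Pplus_apply_eq_self_iff {E : Type*} [NormedAddCommGroup E] [InnerProductSpace ℂ E]
    {J : E →L[ℂ] E} {z : E} : Pplus J z = z ↔ J z = z := by
  simp only [Pplus, smul_apply, add_apply, ContinuousLinearMap.id_apply]
  rw [inv_smul_eq_iff₀ two_ne_zero, two_smul, add_right_inj]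

theorem Pplus_apply_eq_zero_iff {E : Type*} [NormedAddCommGroup E] [InnerProductSpace ℂ E]
    {J : E →L[ℂ] E} {z : E} : Pplus J z = 0 ↔ J z = -z := by
  simp only [Pplus, smul_apply, add_apply, ContinuousLinearMap.id_apply]
  rw [smul_eq_zero_iff_right (by norm_num), add_comm, add_eq_zero_iff_eq_neg]

namespace IsSignatureOperator

variable {J : H →L[ℂ] H}

theorem mul_self (hJ : IsSignatureOperator J) : J * J = 1 :=
  hJ.2

theorem apply_apply (hJ : IsSignatureOperator J) (z : H) : J (J z) = z :=
  DFunLike.congr_fun hJ.2 z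

theorem inner_apply_left (hJ : IsSignatureOperator J) (y z : H) : ⟪J y, z⟫_ℂ = ⟪y, J z⟫_ℂ :=
  hJ.1.isSymmetric y z

theorem norm_apply (hJ : IsSignatureOperator J) (z : H) : ‖J z‖ = ‖z‖ := by
  rw [@norm_eq_sqrt_re_inner ℂ, hJ.inner_apply_left, hJ.apply_apply, ← norm_eq_sqrt_re_inner]

theorem isStarProjection_Pplus (hJ : IsSignatureOperator J) : IsStarProjection (Pplus J) where
  isSelfAdjoint := IsSelfAdjoint.smul (by simp [IsSelfAdjoint]) ((IsSelfAdjoint.one _).add hJ.1)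
  isIdempotentElem := by
    ext z
    rw [mul_apply_eq_comp, Pplus_apply_eq_self_iff]
    simp only [Pplus, smul_apply, add_apply, ContinuousLinearMap.id_apply, map_smul, map_add,
      hJ.apply_apply, add_comm]

theorem Pplus_Pplus_apply (hJ : IsSignatureOperator J) (z : H) :
    Pplus J (Pplus J z) = Pplus J z :=
  DFunLike.congr_fun hJ.isStarProjection_Pplus.isIdempotentElem z

theorem mem_range_Pplus_iff (hJ : IsSignatureOperator J) {z : H} :
    z ∈ (Pplus J).range ↔ J z = z := by
  rw [← Pplus_apply_eq_self_iff]
  exact ⟨fun ⟨w, hw⟩ => hw ▸ hJ.Pplus_Pplus_apply w, fun hz => ⟨z, hz⟩⟩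

theorem exists_Pplus_apply_eq (hJ : IsSignatureOperator J) {M : H →L[ℂ] H} {c : ℝ} (hc : 0 < c)
    (hM : ∀ φ, J φ = φ → c * ‖φ‖ ^ 2 ≤ (⟪M φ, φ⟫_ℂ).re) {η : H} (hη : J η = η) :
    ∃ φ, J φ = φ ∧ Pplus J (M φ) = η := by
  obtain ⟨_, hproj⟩ :=
    isStarProjection_iff_eq_starProjection_range.1 hJ.isStarProjection_Pplus
  have : CompleteSpace (Pplus J).range :=
    (ContinuousLinearMap.IsIdempotentElem.isClosed_range
      hJ.isStarProjection_Pplus.isIdempotentElem).completeSpace_coe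
  simp only [← hJ.mem_range_Pplus_iff] at hM hη ⊢
  obtain ⟨φ, hφ, hMφ⟩ := exists_mem_starProjection_apply_eq hc hM hη
  exact ⟨φ, hφ, hproj ▸ hMφ⟩

end IsSignatureOperator

end SignatureOperator

section GramOperator

variable {J N : H →L[ℂ] H} {S : H ≃L[ℂ] H}

/-- The Gram operator of the indefinite inner product `⟪J ·, ·⟫` in the coordinates `S`, that is,
the operator `W` with `⟪W (S y), S z⟫ = ⟪J y, z⟫`. -/
def gramOperator (J : H →L[ℂ] H) (S : H ≃L[ℂ] H) : H →L[ℂ] H :=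
  star (S.symm : H →L[ℂ] H) * J * (S.symm : H →L[ℂ] H)

theorem inner_gramOperator_apply (y z : H) : ⟪gramOperator J S (S y), S z⟫_ℂ = ⟪J y, z⟫_ℂ := by
  simp [gramOperator, ContinuousLinearMap.star_eq_adjoint, ContinuousLinearMap.adjoint_inner_left]

namespace IsSignatureOperator

variable (hJ : IsSignatureOperator J)
include hJ

theorem isSelfAdjoint_gramOperator : IsSelfAdjoint (gramOperator J S) :=
  hJ.1.conjugate' _

theorem isUnit_gramOperator : IsUnit (gramOperator J S) := by
  have hS : IsUnit (S.symm : H →L[ℂ] H) :=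
    ContinuousLinearMap.isUnit_iff_bijective.2 S.symm.bijective
  exact (hS.star.mul ⟨⟨J, J, hJ.mul_self, hJ.mul_self⟩, rfl⟩).mul hS

theorem gramOperator_mul_nonneg (hN : 0 ≤ N) :
    0 ≤ gramOperator J S * ((S : H →L[ℂ] H) ∘L (N * J) ∘L (S.symm : H →L[ℂ] H)) := by
  convert star_left_conjugate_nonneg hN (J * (S.symm : H →L[ℂ] H)) using 1
  rw [star_mul, hJ.1.star_eq]
  ext z
  simp [gramOperator]

theorem sq_norm_le_re_inner_symm_posSpectralProj {φ : H} (hφ : J φ = φ) :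
    ‖φ‖ ^ 2 ≤ (⟪S.symm (posSpectralProj (gramOperator J S) (S φ)), φ⟫_ℂ).re := by
  set W := gramOperator J S
  set Q := S.symm (posSpectralProj W (S φ)) with hQ
  have hle := le_mul_posSpectralProj (hJ.isSelfAdjoint_gramOperator (S := S))
    hJ.isUnit_gramOperator
  calc ‖φ‖ ^ 2 = (⟪W (S φ), S φ⟫_ℂ).re := by
        rw [inner_gramOperator_apply, hφ]
        exact (inner_self_eq_norm_sq (𝕜 := ℂ) φ).symm
    _ ≤ (⟪(W * posSpectralProj W) (S φ), S φ⟫_ℂ).re := by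
        have hpos := ((ContinuousLinearMap.le_def _ _).1 hle).re_inner_nonneg_left (S φ)
        rwa [sub_apply, inner_sub_left, map_sub, sub_nonneg] at hpos
    _ = (⟪W (S Q), S φ⟫_ℂ).re := by simp [hQ]
    _ = (⟪Q, φ⟫_ℂ).re := by
        rw [inner_gramOperator_apply, hJ.inner_apply_left, hφ]

/-- `W = gramOperator J S` commutes with the self-adjoint operator `T = S (N J) S⁻¹` because `W T`
is nonnegative, so the spectral projections of `W` split the transported equation. -/
theorem exists_isInvStrongSolutionOn_Pplus_eq (hN : 0 ≤ N) (hinj : Function.Injective (N * J))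
    (hT : IsSelfAdjoint ((S : H →L[ℂ] H) ∘L (N * J) ∘L (S.symm : H →L[ℂ] H))) {g : ℝ → H}
    (hg : LocallyHolder g) {C : ℝ} (hC : ∀ x, ‖g x‖ ≤ C) {φ : H} (hφ : J φ = φ) :
    ∃ ψ, ContinuousOn ψ (Ici 0) ∧ IsInvStrongSolutionOn (N * J) g ψ (Ioi 0) ∧
      Pplus J (ψ 0) = φ ∧ ∃ D, ∀ x ∈ Ici (0 : ℝ), ‖ψ x‖ ≤ D := by
  set T := (S : H →L[ℂ] H) ∘L (N * J) ∘L (S.symm : H →L[ℂ] H) with hTdef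
  set W := gramOperator J S
  set P := posSpectralProj W
  have hWsa : IsSelfAdjoint W := hJ.isSelfAdjoint_gramOperator
  have hWu : IsUnit W := hJ.isUnit_gramOperator
  have hWT : 0 ≤ W * T := hJ.gramOperator_mul_nonneg hN
  have hcomm : Commute W T := (hWsa.commute_iff hT).2 (.of_nonneg hWT)
  have hTinj : Function.Injective T := S.injective.comp (hinj.comp S.symm.injective)
  obtain ⟨b, hb⟩ := exists_bounded_isInvStrongSolutionOn_Ioi
    (isIdempotentElem_posSpectralProj hWu) (commute_posSpectralProj hcomm)
    (nonneg_mul_two_posSpectralProj_sub_one hWsa hWu hcomm hWT) hTinj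
    (hg.lipschitzWith_comp (S : H →L[ℂ] H).lipschitz)
    (fun x => (S : H →L[ℂ] H).le_opNorm_of_le (hC x))
  have hη : J (φ - Pplus J (S.symm b)) = φ - Pplus J (S.symm b) := by
    rw [map_sub, hφ, Pplus_apply_eq_self_iff.1 (hJ.Pplus_Pplus_apply _)]
  obtain ⟨z, -, hz⟩ := hJ.exists_Pplus_apply_eq
    (M := (S.symm : H →L[ℂ] H) ∘L P ∘L (S : H →L[ℂ] H)) one_pos
    (fun z hz => (one_mul _).trans_le (hJ.sq_norm_le_re_inner_symm_posSpectralProj hz)) hη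
  obtain ⟨χ, hχc, hχ, hχ0, D, hD⟩ := hb (P (S z))
    (DFunLike.congr_fun (isIdempotentElem_posSpectralProj hWu) (S z))
  refine ⟨S.symm ∘ χ, S.symm.continuous.comp_continuousOn hχc, ?_, ?_, _,
    fun x hx => (S.symm : H →L[ℂ] H).le_opNorm_of_le (hD x hx)⟩
  · have := hχ.map (T' := N * J) (S.symm : H →L[ℂ] H) (by ext; simp [hTdef])
    simpa [Function.comp_def] using this
  · rw [Function.comp_apply, hχ0, map_add, map_add]
    exact (congrArg (· + _) hz).trans (sub_add_cancel _ _)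

end IsSignatureOperator

end GramOperator

section Uniqueness

variable {G d : ℝ → ℝ} {c : ℝ}

theorem antitoneOn_Ici_of_hasDerivAt_nonpos (hG : ContinuousOn G (Ici 0))
    (hder : ∀ x ∈ Ioi 0, HasDerivAt G (d x) x) (hd : ∀ x ∈ Ioi 0, d x ≤ 0) :
    AntitoneOn G (Ici 0) := by
  refine antitoneOn_of_hasDerivWithinAt_nonpos (convex_Ici 0) hG (f' := d) ?_ ?_ <;>
    rw [interior_Ici]
  · exact fun x hx => (hder x hx).hasDerivWithinAt
  · exact hd

/-- By the integrating factor `exp (-c x)`, the function `exp (-c x) G x` is antitone, and it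
tends to a nonnegative limit because `G` is bounded below. -/
theorem nonneg_of_hasDerivAt_le_mul (hc : 0 < c) (hG : ContinuousOn G (Ici 0))
    (hder : ∀ x ∈ Ioi 0, HasDerivAt G (d x) x) (hd : ∀ x ∈ Ioi 0, d x ≤ c * G x) {m : ℝ}
    (hm : ∀ x ∈ Ici 0, m ≤ G x) : ∀ x ∈ Ici 0, 0 ≤ G x := by
  intro x hx
  have hexp : ∀ y, HasDerivAt (fun y => Real.exp (-(c * y))) (Real.exp (-(c * y)) * -c) y :=
    fun y => by simpa using (((hasDerivAt_id y).const_mul c).neg).exp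
  have hanti : AntitoneOn (fun y => Real.exp (-(c * y)) * G y) (Ici 0) := by
    refine antitoneOn_Ici_of_hasDerivAt_nonpos (ContinuousOn.mul (by fun_prop) hG)
      (fun y hy => (hexp y).mul (hder y hy)) fun y hy => ?_
    nlinarith [Real.exp_pos (-(c * y)), hd y hy]
  have hlim : Tendsto (fun y => Real.exp (-(c * y)) * m) atTop (𝓝 0) := by
    simpa using (Real.tendsto_exp_neg_atTop_nhds_zero.comp
      (tendsto_id.const_mul_atTop hc)).mul_const m
  refine nonneg_of_mul_nonneg_right (le_of_tendsto hlim ?_) (Real.exp_pos (-(c * x)))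
  filter_upwards [eventually_ge_atTop x] with y hy
  have hy0 : y ∈ Ici 0 := hx.trans hy
  calc Real.exp (-(c * y)) * m ≤ Real.exp (-(c * y)) * G y := by gcongr; exact hm y hy0
    _ ≤ Real.exp (-(c * x)) * G x := hanti hx hy0 hy

theorem IsStrongSolutionOn.sub {E : Type*} [NormedAddCommGroup E] [InnerProductSpace ℂ E]
    {B : E →ₗ.[ℂ] E} {f g u v : ℝ → E} {s : Set ℝ} (hu : IsStrongSolutionOn B f u s)
    (hv : IsStrongSolutionOn B g v s) : IsStrongSolutionOn B (f - g) (u - v) s := by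
  obtain ⟨u', hu'c, hu⟩ := hu
  obtain ⟨v', hv'c, hv⟩ := hv
  refine ⟨u' - v', hu'c.sub hv'c, fun x hx => ?_⟩
  obtain ⟨hu', hux, hBu⟩ := hu x hx
  obtain ⟨hv', hvx, hBv⟩ := hv x hx
  refine ⟨hu'.sub hv', B.domain.sub_mem hux hvx, ?_⟩
  have hsub : B ⟨(u - v) x, B.domain.sub_mem hux hvx⟩ = B ⟨u x, hux⟩ - B ⟨v x, hvx⟩ :=
    B.map_sub ⟨u x, hux⟩ ⟨v x, hvx⟩
  rw [Pi.sub_apply, hBu, hBv, hsub, Pi.sub_apply]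
  abel

theorem hasDerivAt_re_inner_apply {J : H →L[ℂ] H} (hJ : IsSelfAdjoint J) {ψ : ℝ → H} {v : H}
    {x : ℝ} (hψ : HasDerivAt ψ v x) :
    HasDerivAt (fun y => (⟪J (ψ y), ψ y⟫_ℂ).re) (2 * (⟪J v, ψ x⟫_ℂ).re) x := by
  have hJψ : HasDerivAt (fun y => J (ψ y)) (J v) x :=
    (J.restrictScalars ℝ).hasFDerivAt.comp_hasDerivAt x hψ
  refine (Complex.reCLM.hasFDerivAt.comp_hasDerivAt x (hJψ.inner ℂ hψ)).congr_deriv ?_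
  have hsymm : (⟪J (ψ x), v⟫_ℂ).re = (⟪J v, ψ x⟫_ℂ).re :=
    (congrArg Complex.re (hJ.isSymmetric (ψ x) v)).trans (inner_re_symm (𝕜 := ℂ) _ _)
  rw [Complex.reCLM_apply, Complex.add_re, hsymm, two_mul]

namespace IsSignatureOperator

variable {J : H →L[ℂ] H} {L : H →ₗ.[ℂ] H} {ψ : ℝ → H} (hJ : IsSignatureOperator J)
include hJ

theorem abs_re_inner_apply_le (z : H) : |(⟪J z, z⟫_ℂ).re| ≤ ‖z‖ ^ 2 := by
  calc |(⟪J z, z⟫_ℂ).re| ≤ ‖J z‖ * ‖z‖ :=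
        (Complex.abs_re_le_norm _).trans (norm_inner_le_norm _ _)
    _ = ‖z‖ ^ 2 := by rw [hJ.norm_apply, sq]

theorem exists_hasDerivAt_re_inner_apply {s : Set ℝ}
    (hpos : ∀ h : L.domain, c * ‖(h : H)‖ ^ 2 ≤ (⟪L h, (h : H)⟫_ℂ).re)
    (hψ : IsStrongSolutionOn (pmapComp J L) 0 ψ s) :
    ∃ d : ℝ → ℝ, ∀ x ∈ s, HasDerivAt (fun y => (⟪J (ψ y), ψ y⟫_ℂ).re) (d x) x ∧
      d x ≤ -(2 * c * ‖ψ x‖ ^ 2) := by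
  obtain ⟨ψ', -, hsol⟩ := hψ
  refine ⟨_, fun x hx => ⟨hasDerivAt_re_inner_apply hJ.1 (hsol x hx).1, ?_⟩⟩
  obtain ⟨-, hdom, hψ'⟩ := hsol x hx
  have hJψ' : J (ψ' x) = -L ⟨ψ x, hdom⟩ := by
    rw [hψ', Pi.zero_apply, add_zero, map_neg]
    exact congrArg Neg.neg (hJ.apply_apply _)
  rw [hJψ', inner_neg_left, Complex.neg_re]
  linarith [hpos ⟨ψ x, hdom⟩]

/-- Along a solution `⟪J ψ, ψ⟫` decreases at rate at least `2 c ‖ψ‖ ^ 2`, so boundedness keeps it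
nonnegative, whereas `ψ 0 ∈ H₋` makes it start at `-‖ψ 0‖ ^ 2`. -/
theorem eqOn_zero_of_isStrongSolutionOn (hc : 0 < c)
    (hpos : ∀ h : L.domain, c * ‖(h : H)‖ ^ 2 ≤ (⟪L h, (h : H)⟫_ℂ).re)
    (hψc : ContinuousOn ψ (Ici 0)) (hψ : IsStrongSolutionOn (pmapComp J L) 0 ψ (Ioi 0))
    (hψ0 : Pplus J (ψ 0) = 0) {C : ℝ} (hC : ∀ x ∈ Ici (0 : ℝ), ‖ψ x‖ ≤ C) :
    EqOn ψ 0 (Ici 0) := by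
  set G : ℝ → ℝ := fun x => (⟪J (ψ x), ψ x⟫_ℂ).re with hG
  have hGc : ContinuousOn G (Ici 0) :=
    Complex.continuous_re.comp_continuousOn ((J.continuous.comp_continuousOn hψc).inner hψc)
  have hGabs : ∀ x, |G x| ≤ ‖ψ x‖ ^ 2 := fun x => hJ.abs_re_inner_apply_le (ψ x)
  obtain ⟨d, hd⟩ := hJ.exists_hasDerivAt_re_inner_apply hpos hψ
  have hnonneg : ∀ x ∈ Ici 0, 0 ≤ G x := by
    refine nonneg_of_hasDerivAt_le_mul (mul_pos two_pos hc) hGc (fun x hx => (hd x hx).1)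
      (fun x hx => ?_) (m := -C ^ 2) fun x hx => ?_
    · nlinarith [(hd x hx).2, (abs_le.1 (hGabs x)).1]
    · nlinarith [(abs_le.1 (hGabs x)).1, hC x hx, norm_nonneg (ψ x)]
  have hG0 : G 0 = -‖ψ 0‖ ^ 2 := by
    simp only [hG, Pplus_apply_eq_zero_iff.1 hψ0, inner_neg_left, Complex.neg_re]
    exact congrArg Neg.neg (inner_self_eq_norm_sq (𝕜 := ℂ) (ψ 0))
  have hanti : AntitoneOn G (Ici 0) :=
    antitoneOn_Ici_of_hasDerivAt_nonpos hGc (fun x hx => (hd x hx).1) fun x hx =>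
      (hd x hx).2.trans (neg_nonpos.2 (by positivity))
  have hzero : ∀ x ∈ Ici 0, G x = 0 := fun x hx =>
    ((hanti self_mem_Ici hx hx).trans (by simp [hG0])).antisymm (hnonneg x hx)
  intro x hx
  rcases (mem_Ici.1 hx).eq_or_lt with rfl | hx
  · simpa [hG0] using hzero 0 self_mem_Ici
  · have hder0 : HasDerivAt G 0 x := (hasDerivAt_const x (0 : ℝ)).congr_of_eventuallyEq (by
      filter_upwards [Ioi_mem_nhds hx] with y hy using hzero y (mem_Ioi.1 hy).le)
    have hdx := (hd x hx).2
    rw [(hd x hx).1.unique hder0] at hdx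
    have hsq : ‖ψ x‖ ^ 2 ≤ 0 := by nlinarith
    simpa using hsq.antisymm (sq_nonneg _)

theorem eqOn_of_isStrongSolutionOn {f ψ₁ ψ₂ : ℝ → H} (hc : 0 < c)
    (hpos : ∀ h : L.domain, c * ‖(h : H)‖ ^ 2 ≤ (⟪L h, (h : H)⟫_ℂ).re)
    (hψc₁ : ContinuousOn ψ₁ (Ici 0)) (hψ₁ : IsStrongSolutionOn (pmapComp J L) f ψ₁ (Ioi 0))
    (hψc₂ : ContinuousOn ψ₂ (Ici 0)) (hψ₂ : IsStrongSolutionOn (pmapComp J L) f ψ₂ (Ioi 0))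
    (hψ0 : Pplus J (ψ₁ 0) = Pplus J (ψ₂ 0)) {C₁ C₂ : ℝ} (hC₁ : ∀ x ∈ Ici (0 : ℝ), ‖ψ₁ x‖ ≤ C₁)
    (hC₂ : ∀ x ∈ Ici (0 : ℝ), ‖ψ₂ x‖ ≤ C₂) : EqOn ψ₁ ψ₂ (Ici 0) := by
  have hsub : IsStrongSolutionOn (pmapComp J L) 0 (ψ₁ - ψ₂) (Ioi 0) :=
    sub_self f ▸ hψ₁.sub hψ₂
  have hzero := hJ.eqOn_zero_of_isStrongSolutionOn hc hpos (hψc₁.sub hψc₂) hsub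
    (by rw [Pi.sub_apply, map_sub, hψ0, sub_self])
    (fun x hx => norm_sub_le_of_le (hC₁ x hx) (hC₂ x hx))
  exact fun x hx => sub_eq_zero.1 (hzero hx)

end IsSignatureOperator

end Uniqueness

section HalfSpaceProblem

theorem holderOnWith_of_dist_le {X Y : Type*} [PseudoMetricSpace X] [PseudoMetricSpace Y]
    {f : X → Y} {s : Set X} {K k : ℝ≥0}
    (hf : ∀ x ∈ s, ∀ y ∈ s, dist (f x) (f y) ≤ K * dist x y ^ (k : ℝ)) : HolderOnWith K k f s := by
  intro x hx y hy
  rw [edist_nndist, edist_nndist, ← ENNReal.coe_rpow_of_nonneg _ k.coe_nonneg, ← ENNReal.coe_mul,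
    ENNReal.coe_le_coe]
  exact_mod_cast hf x hx y hy

theorem locallyHolder_comp_max {X : Type*} [PseudoEMetricSpace X] {f : ℝ → X}
    (hf : ∀ x₁ > 0, ∃ K k : ℝ≥0, 0 < k ∧ HolderOnWith K k f (Icc 0 x₁)) :
    LocallyHolder fun x => f (max x 0) := by
  intro x
  obtain ⟨K, k, hk, hfK⟩ := hf (max x 0 + 1) (by positivity)
  refine ⟨_, _, by simpa using hk, Iio (max x 0 + 1), Iio_mem_nhds (by linarith [le_max_left x 0]),
    hfK.comp ((LipschitzWith.id.max_const 0).holderWith.holderOnWith _) fun y hy => ?_⟩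
  exact ⟨le_max_right _ _, max_le (mem_Iio.1 hy).le (by positivity)⟩

theorem SimilarToSelfAdjoint.exists_isSelfAdjoint_conj {B : H →ₗ.[ℂ] H}
    (hB : SimilarToSelfAdjoint B) {T : H →L[ℂ] H} (hT : IsBoundedRightInverse B T) :
    ∃ S : H ≃L[ℂ] H, IsSelfAdjoint ((S : H →L[ℂ] H) ∘L T ∘L (S.symm : H →L[ℂ] H)) := by
  obtain ⟨S, A, hA, hdom, hAB⟩ := hB
  have hmaps : ∀ x ∈ B.domain, S x ∈ A.domain := fun x hx => by
    rw [← SetLike.mem_coe, hdom]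
    exact mem_image_of_mem _ hx
  exact ⟨S, (hT.conj S hmaps hAB).isSelfAdjoint hA⟩

theorem IsStrongSolutionOn.congr {E : Type*} [NormedAddCommGroup E] [InnerProductSpace ℂ E]
    {B : E →ₗ.[ℂ] E} {f g u : ℝ → E} {s : Set ℝ} (hu : IsStrongSolutionOn B f u s)
    (hfg : EqOn f g s) : IsStrongSolutionOn B g u s := by
  obtain ⟨u', hu', hsol⟩ := hu
  exact ⟨u', hu', fun x hx => hfg hx ▸ hsol x hx⟩

theorem IsSignatureOperator.exists_isStrongSolutionOn {J : H →L[ℂ] H} {L : H →ₗ.[ℂ] H} {c C : ℝ}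
    {f : ℝ → H} {φ : H} (hJ : IsSignatureOperator J) (hL : IsSelfAdjoint L) (hc : 0 < c)
    (hpos : ∀ h : L.domain, c * ‖(h : H)‖ ^ 2 ≤ (⟪L h, (h : H)⟫_ℂ).re)
    (hsim : SimilarToSelfAdjoint (pmapComp J L)) (hf : LocallyHolder fun x => f (max x 0))
    (hC : ∀ x ∈ Ici (0 : ℝ), ‖f x‖ ≤ C) (hφ : J φ = φ) :
    ∃ ψ, ContinuousOn ψ (Ici 0) ∧ IsStrongSolutionOn (pmapComp J L) f ψ (Ioi 0) ∧
      Pplus J (ψ 0) = φ ∧ ∃ D, ∀ x ∈ Ici (0 : ℝ), ‖ψ x‖ ≤ D := by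
  obtain ⟨N, hN⟩ := exists_isBoundedRightInverse_of_mul_sq_le_re_inner hL hc hpos
  have hNpos : 0 ≤ N := hN.nonneg hL fun h =>
    (by positivity : 0 ≤ c * ‖(h : H)‖ ^ 2).trans (hpos h)
  have hT : IsBoundedRightInverse (pmapComp J L) (N * J) := hN.pmapComp hJ.mul_self
  obtain ⟨S, hS⟩ := hsim.exists_isSelfAdjoint_conj hT
  obtain ⟨ψ, hψc, hψ, hψ0, hψb⟩ := hJ.exists_isInvStrongSolutionOn_Pplus_eq hNpos hT.injective hS
    hf (fun x => hC _ (le_max_right x 0)) hφ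
  refine ⟨ψ, hψc, (hψ.isStrongSolutionOn hT).congr fun x hx => ?_, hψ0, hψb⟩
  simp only [max_eq_left (mem_Ioi.1 hx).le]

end HalfSpaceProblem

/-- If `L = L* ≥ lam0 > 0` is uniformly positive and `B = JL` is similar to a
self-adjoint operator, `f` is locally Hölder continuous on `[0, ∞)` and bounded, then the
half-space problem `dψ/dx = -Bψ + f`, `P₊ψ(0) = φ₊`, `‖ψ(x)‖ = O(1)` has a unique solution. -/
theorem statement17 (J : H →L[ℂ] H) (hJ : IsSignatureOperator J)
    (L : H →ₗ.[ℂ] H) (hdense : Dense (L.domain : Set H))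
    (hLsa : IsSelfAdjoint L)
    (lam0 : ℝ) (hlam0 : 0 < lam0)
    (hunif : ∀ h : L.domain, ((lam0 * ‖(h : H)‖ ^ 2 : ℝ) : ℂ) ≤ ⟪L h, (h : H)⟫_ℂ)
    (hsim : SimilarToSelfAdjoint (pmapComp J L))
    (f : ℝ → H)
    (hf : ∀ x₁ > (0 : ℝ), ∃ K > (0 : ℝ), ∃ k ∈ Set.Ioc (0 : ℝ) 1,
      ∀ x ∈ Set.Icc (0 : ℝ) x₁, ∀ y ∈ Set.Icc (0 : ℝ) x₁, ‖f x - f y‖ ≤ K * |x - y| ^ k)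
    (hfbdd : ∃ Cf : ℝ, ∀ x ∈ Set.Ici (0 : ℝ), ‖f x‖ ≤ Cf)
    (φp : H) (hφp : J φp = φp) :
    (∃ ψ : ℝ → H,
        ContinuousOn ψ (Set.Ici 0) ∧
        IsStrongSolutionOn (pmapComp J L) f ψ (Set.Ioi 0) ∧
        Pplus J (ψ 0) = φp ∧
        (∃ C : ℝ, ∀ x ∈ Set.Ici (0 : ℝ), ‖ψ x‖ ≤ C)) ∧
    (∀ ψ₁ ψ₂ : ℝ → H,
        (ContinuousOn ψ₁ (Set.Ici 0) ∧
          IsStrongSolutionOn (pmapComp J L) f ψ₁ (Set.Ioi 0) ∧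
          Pplus J (ψ₁ 0) = φp ∧
          (∃ C : ℝ, ∀ x ∈ Set.Ici (0 : ℝ), ‖ψ₁ x‖ ≤ C)) →
        (ContinuousOn ψ₂ (Set.Ici 0) ∧
          IsStrongSolutionOn (pmapComp J L) f ψ₂ (Set.Ioi 0) ∧
          Pplus J (ψ₂ 0) = φp ∧
          (∃ C : ℝ, ∀ x ∈ Set.Ici (0 : ℝ), ‖ψ₂ x‖ ≤ C)) →
        Set.EqOn ψ₁ ψ₂ (Set.Ici 0)) := by
  have hpos : ∀ h : L.domain, lam0 * ‖(h : H)‖ ^ 2 ≤ (⟪L h, (h : H)⟫_ℂ).re := fun h =>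
    (Complex.le_def.1 (hunif h)).1
  have hfHolder : LocallyHolder fun x => f (max x 0) := locallyHolder_comp_max fun x₁ hx₁ => by
    obtain ⟨K, hK, k, hk, hfK⟩ := hf x₁ hx₁
    lift K to ℝ≥0 using hK.le
    lift k to ℝ≥0 using hk.1.le
    exact ⟨K, k, hk.1, holderOnWith_of_dist_le <| by
      simpa only [dist_eq_norm, Real.norm_eq_abs] using hfK⟩
  obtain ⟨Cf, hCf⟩ := hfbdd
  refine ⟨hJ.exists_isStrongSolutionOn hLsa hlam0 hpos hsim hfHolder hCf hφp, ?_⟩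
  rintro ψ₁ ψ₂ ⟨hc₁, hψ₁, hφ₁, C₁, hC₁⟩ ⟨hc₂, hψ₂, hφ₂, C₂, hC₂⟩
  exact hJ.eqOn_of_isStrongSolutionOn hlam0 hpos hc₁ hψ₁ hc₂ hψ₂ (hφ₁.trans hφ₂.symm) hC₁ hC₂

end
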